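/- There exists a finite packing of balls in ℝ³ whose average kissing number is at least 7656/607 (≈ 12.61285): there are finitely many closed balls with positive radii and pairwise disjoint interiors, n ≥ 1 of them in total, such that twice the number of tangent pairs divided by n is at least 7656/607. -/

import Mathlib

noncomputable section

/-!
A ball in the sphere `S³` is a unit vector of Lorentz space `ℝ⁴ × ℝ`. Two balls have disjoint
interiors if the Lorentz product of their vectors is at most `-1`, and touch if it equals `-1`;
stereographic projection turns a packing in `S³` into one in `ℝ³`.

Start from the 120 balls centred at the vertices of the 600-cell, each of which touches 12 others.
The 12 neighbours of a ball are orthogonal to a common sphere; for each of the 24 vertices of an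
inscribed 24-cell, replace the ball by the mirror in this sphere. Each of the 24 mirrors encloses
the angle `π / 5` with 8 others, so the mirrors of each of these 96 pairs generate a dihedral group
of order 10. Take the images of the remaining balls under these groups, without the balls that
another mirror cuts. Sorted by the set of mirrors moving them (none, one, or an adjacent pair),
there are at most `96 + 24 * 99 + 96 * 733 = 120 * 607` balls, and at least
`864 + 24 * 1164 + 96 * 9270 = 120 * 7656` ordered pairs of touching ones.
-/

open Finset Module
open scoped goldenRatio RealInnerProductSpace

/-! ### Packings in Lorentz space -/

section LorentzSpace

variable {F : Type*} [NormedAddCommGroup F] [InnerProductSpace ℝ F]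

variable (F) in
/-- The Lorentz form `⟪u, v⟫ - h k` on `F × ℝ`. Its unit vectors represent the oriented spheres of
the conformal boundary. -/
def lorentzForm : LinearMap.BilinForm ℝ (F × ℝ) :=
  (innerₗ F).compl₁₂ (.fst ℝ F ℝ) (.fst ℝ F ℝ) -
    (LinearMap.mul ℝ ℝ).compl₁₂ (.snd ℝ F ℝ) (.snd ℝ F ℝ)

@[simp]
theorem lorentzForm_apply (x y : F × ℝ) : lorentzForm F x y = ⟪x.1, y.1⟫ - x.2 * y.2 := by
  simp [lorentzForm]

theorem lorentzForm_isSymm : (lorentzForm F).IsSymm :=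
  ⟨fun x y ↦ by simp [real_inner_comm, mul_comm]⟩

/-- The signed curvature of the ball represented by a unit Lorentz vector, after stereographic
projection from the unit vector `n`. -/
def sphereCurvature (n : F) : F × ℝ →ₗ[ℝ] ℝ :=
  .snd ℝ F ℝ - innerₗ F n ∘ₗ .fst ℝ F ℝ

theorem sphereCurvature_apply (n : F) (x : F × ℝ) : sphereCurvature n x = x.2 - ⟪n, x.1⟫ := by
  simp [sphereCurvature]

/-- The centre of the ball represented by a unit Lorentz vector, after stereographic projection
from the unit vector `n` onto `nᗮ`. -/
def sphereCenter (n : F) (x : F × ℝ) : (ℝ ∙ n)ᗮ :=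
  (sphereCurvature n x)⁻¹ • (ℝ ∙ n)ᗮ.orthogonalProjectionOnto x.1

theorem inner_orthogonalProjectionOnto_orthogonal_singleton {n : F} (hn : ‖n‖ = 1) (u v : F) :
    ⟪(ℝ ∙ n)ᗮ.orthogonalProjectionOnto u, (ℝ ∙ n)ᗮ.orthogonalProjectionOnto v⟫ =
      ⟪u, v⟫ - ⟪n, u⟫ * ⟪n, v⟫ := by
  rw [Submodule.inner_orthogonalProjectionOnto_eq_of_mem_left,
    Submodule.coe_orthogonalProjectionOnto_apply, Submodule.starProjection_orthogonal_val,
    Submodule.starProjection_unit_singleton ℝ hn, inner_sub_left, real_inner_smul_left]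

theorem dist_sphereCenter_sq {n : F} (hn : ‖n‖ = 1) {x y : F × ℝ}
    (hx : lorentzForm F x x = 1) (hy : lorentzForm F y y = 1)
    (hax : sphereCurvature n x ≠ 0) (hay : sphereCurvature n y ≠ 0) :
    dist (sphereCenter n x) (sphereCenter n y) ^ 2 =
      ((sphereCurvature n x)⁻¹ + (sphereCurvature n y)⁻¹) ^ 2 -
        2 * (sphereCurvature n x)⁻¹ * (sphereCurvature n y)⁻¹ * (1 + lorentzForm F x y) := by
  rw [dist_eq_norm, ← real_inner_self_eq_norm_sq]
  simp only [sphereCenter, inner_sub_left, inner_sub_right, real_inner_smul_left,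
    real_inner_smul_right, inner_orthogonalProjectionOnto_orthogonal_singleton hn]
  simp only [lorentzForm_apply] at hx hy ⊢
  have hxn : ⟪n, x.1⟫ = x.2 - sphereCurvature n x := by rw [sphereCurvature_apply]; ring
  have hyn : ⟪n, y.1⟫ = y.2 - sphereCurvature n y := by rw [sphereCurvature_apply]; ring
  rw [real_inner_comm x.1 y.1, hxn, hyn, eq_add_of_sub_eq hx, eq_add_of_sub_eq hy]
  field_simp
  ring

theorem dist_sphereCenter_eq_iff {n : F} (hn : ‖n‖ = 1) {x y : F × ℝ}
    (hx : lorentzForm F x x = 1) (hy : lorentzForm F y y = 1)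
    (hax : 0 < sphereCurvature n x) (hay : 0 < sphereCurvature n y) :
    dist (sphereCenter n x) (sphereCenter n y) =
      (sphereCurvature n x)⁻¹ + (sphereCurvature n y)⁻¹ ↔ lorentzForm F x y = -1 := by
  rw [← sq_eq_sq₀ dist_nonneg (by positivity), dist_sphereCenter_sq hn hx hy hax.ne' hay.ne',
    sub_eq_self, mul_eq_zero_iff_left (by positivity), add_comm, add_eq_zero_iff_eq_neg]

theorem add_inv_le_dist_sphereCenter {n : F} (hn : ‖n‖ = 1) {x y : F × ℝ}
    (hx : lorentzForm F x x = 1) (hy : lorentzForm F y y = 1)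
    (hax : 0 < sphereCurvature n x) (hay : 0 < sphereCurvature n y)
    (hxy : lorentzForm F x y ≤ -1) :
    (sphereCurvature n x)⁻¹ + (sphereCurvature n y)⁻¹ ≤
      dist (sphereCenter n x) (sphereCenter n y) := by
  rw [← sq_le_sq₀ (by positivity) dist_nonneg, dist_sphereCenter_sq hn hx hy hax.ne' hay.ne',
    le_sub_self_iff]
  exact mul_nonpos_of_nonneg_of_nonpos (by positivity) (by linarith)

end LorentzSpace

theorem card_filter_eq_two_mul_card_filter_lt {α : Type*} [Fintype α] [LinearOrder α]
    {R : α → α → Prop} [DecidableRel R] (symm : ∀ a b, R a b → R b a) (irrefl : ∀ a, ¬ R a a) :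
    #{p : α × α | R p.1 p.2} = 2 * #{p : α × α | p.1 < p.2 ∧ R p.1 p.2} := by
  have hgt : #{p : α × α | p.2 < p.1 ∧ R p.1 p.2} = #{p : α × α | p.1 < p.2 ∧ R p.1 p.2} :=
    card_equiv (Equiv.prodComm α α) fun p ↦ by
      simp only [mem_filter_univ, Equiv.prodComm_apply, Prod.fst_swap, Prod.snd_swap]
      exact and_congr_right fun _ ↦ ⟨symm _ _, symm _ _⟩
  rw [two_mul]
  nth_rw 2 [← hgt]
  rw [← card_union_of_disjoint (disjoint_filter.mpr fun p _ h h' ↦ lt_asymm h.1 h'.1),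
    ← filter_or]
  congr 1
  refine filter_congr fun p _ ↦ ?_
  rw [← or_and_right, lt_or_lt_iff_ne, iff_and_self]
  exact fun h hp ↦ irrefl p.2 (hp ▸ h)

open Classical in
theorem exists_packing_of_lorentzForm_le {F : Type*} [NormedAddCommGroup F] [InnerProductSpace ℝ F]
    {d : ℕ} [Fact (finrank ℝ F = d + 1)] {n : F} (hn : ‖n‖ = 1) {ι : Type*} (s : Finset ι)
    (v : ι → F × ℝ) (hv : ∀ i ∈ s, lorentzForm F (v i) (v i) = 1)
    (hpos : ∀ i ∈ s, 0 < sphereCurvature n (v i))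
    (hsep : ∀ i ∈ s, ∀ j ∈ s, i ≠ j → lorentzForm F (v i) (v j) ≤ -1) :
    ∃ (c : Fin #s → EuclideanSpace ℝ (Fin d)) (r : Fin #s → ℝ),
      (∀ i, 0 < r i) ∧ (∀ i j, i ≠ j → r i + r j ≤ dist (c i) (c j)) ∧
      #{e ∈ s ×ˢ s | lorentzForm F (v e.1) (v e.2) = -1} =
        2 * Nat.card {p : Fin #s × Fin #s //
          p.1 < p.2 ∧ dist (c p.1) (c p.2) = r p.1 + r p.2} := by
  let chart := (OrthonormalBasis.fromOrthogonalSpanSingleton (𝕜 := ℝ) d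
    (ne_of_apply_ne norm (by simp [hn]) : n ≠ 0)).repr
  let w (i : Fin #s) : F × ℝ := v (s.equivFin.symm i)
  have hw (i) : lorentzForm F (w i) (w i) = 1 := hv _ (s.equivFin.symm i).2
  have hw_pos (i) : 0 < sphereCurvature n (w i) := hpos _ (s.equivFin.symm i).2
  refine ⟨fun i ↦ chart (sphereCenter n (w i)), fun i ↦ (sphereCurvature n (w i))⁻¹,
    fun i ↦ inv_pos.mpr (hw_pos i), fun i j hij ↦ ?_, ?_⟩
  · rw [chart.dist_map]
    refine add_inv_le_dist_sphereCenter hn (hw i) (hw j) (hw_pos i) (hw_pos j)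
      (hsep _ (s.equivFin.symm i).2 _ (s.equivFin.symm j).2 ?_)
    rwa [Ne, Subtype.coe_inj, s.equivFin.symm.apply_eq_iff_eq]
  · simp_rw [chart.dist_map,
      fun i j ↦ dist_sphereCenter_eq_iff hn (hw i) (hw j) (hw_pos i) (hw_pos j)]
    rw [Nat.card_eq_fintype_card, Fintype.card_subtype,
      ← card_filter_eq_two_mul_card_filter_lt
        (R := fun i j ↦ lorentzForm F (w i) (w j) = -1)
        (fun i j h ↦ by rwa [lorentzForm_isSymm.eq]) fun i h ↦ by linarith [hw i]]
    refine (card_bij (fun p _ ↦ ((s.equivFin.symm p.1 : ι), (s.equivFin.symm p.2 : ι)))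
      (fun p hp ↦ ?_) (fun p _ q _ hpq ↦ ?_) fun e he ↦ ?_).symm
    · simpa [w] using hp
    · simpa [Prod.ext_iff, Subtype.coe_inj] using hpq
    · simp only [mem_filter, mem_product] at he
      exact ⟨(s.equivFin ⟨e.1, he.1.1⟩, s.equivFin ⟨e.2, he.1.2⟩), by simpa [w] using he.2, by simp⟩

/-- The ring `ℤ[φ]` of integers of `ℚ(√5)`, with exact and decidable arithmetic. -/
abbrev GoldenInt := QuadraticAlgebra ℤ 1 1

namespace GoldenInt

/-- The real embedding of `ℤ[φ]`. -/
def toReal : GoldenInt →ₐ[ℤ] ℝ :=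
  QuadraticAlgebra.lift ⟨φ, by simp [← sq, Real.goldenRatio_sq, add_comm]⟩

theorem toReal_apply (z : GoldenInt) : toReal z = z.re + z.im * φ := by
  simp [toReal, QuadraticAlgebra.lift]

theorem toReal_injective : Function.Injective toReal := by
  refine (injective_iff_map_eq_zero _).2 fun z hz ↦ ?_
  rw [toReal_apply] at hz
  have him : z.im = 0 := by
    by_contra him
    refine (Real.goldenRatio_irrational.intCast_mul him).ne_int (-z.re) ?_
    push_cast
    linarith
  have hre : z.re = 0 := by simpa [him] using hz
  exact QuadraticAlgebra.ext hre him

/-- The inequality `z ≤ w` for both values `1` and `2` of `φ`. It is decidable and implies the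
inequality of the real values, as `1 < φ < 2`. -/
def BracketLE (z w : GoldenInt) : Prop :=
  z.re + z.im ≤ w.re + w.im ∧ z.re + 2 * z.im ≤ w.re + 2 * w.im

instance : DecidableRel BracketLE := fun _ _ ↦ instDecidableAnd

theorem BracketLE.toReal_le {z w : GoldenInt} (h : BracketLE z w) : toReal z ≤ toReal w := by
  have h₁ : (z.re + z.im : ℝ) ≤ w.re + w.im := mod_cast h.1
  have h₂ : (z.re + 2 * z.im : ℝ) ≤ w.re + 2 * w.im := mod_cast h.2
  rw [toReal_apply, toReal_apply]
  nlinarith [mul_nonneg (sub_nonneg.2 h₁) (sub_nonneg.2 Real.goldenRatio_lt_two.le),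
    mul_nonneg (sub_nonneg.2 h₂) (sub_nonneg.2 Real.one_lt_goldenRatio.le)]

end GoldenInt

/-! ### The dihedral group of order 10 -/

/-- The symmetry group of a regular pentagon. It is generated by two mirrors enclosing an angle
`π / 5`. -/
abbrev PentagonGroup := DihedralGroup 5

namespace PentagonGroup

open DihedralGroup GoldenInt

/-- The first of the two generating mirrors. -/
def s : PentagonGroup := sr 0

/-- The second of the two generating mirrors. -/
def t : PentagonGroup := sr 1

/-- The automorphism exchanging `s` and `t`: conjugation by the longest element. -/
def swap : MulAut PentagonGroup := MulAut.conj (sr 3)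

/-- The word length with respect to the generators `s` and `t`. -/
def length : PentagonGroup → ℕ
  | r i => ![0, 2, 4, 4, 2] i
  | sr i => ![1, 1, 3, 5, 3] i

/-- The contribution of the height over the mirror of `s` to `rootCoeff`. -/
def rootCoeffLeft : PentagonGroup → GoldenInt
  | r i => ![0, 1, ⟨1, 1⟩, ⟨1, 1⟩, 1] i
  | sr i => ![1, 0, 1, ⟨1, 1⟩, ⟨1, 1⟩] i

/-- The contribution of the height over the mirror of `t` to `rootCoeff`. -/
def rootCoeffRight : PentagonGroup → GoldenInt
  | r i => ![0, ⟨0, 1⟩, ⟨1, 1⟩, ⟨0, 1⟩, 0] i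
  | sr i => ![0, 0, ⟨0, 1⟩, ⟨1, 1⟩, ⟨0, 1⟩] i

/-- The element `g` moves a vector of heights `p` and `q` over the mirrors of `s` and `t` by
`rootCoeff g p q` times the root of `s` plus `rootCoeff (swap g) q p` times the root of `t`, up to a
common scale. -/
def rootCoeff (g : PentagonGroup) (p q : ℝ) : ℝ :=
  toReal (rootCoeffLeft g) * p + toReal (rootCoeffRight g) * q

/-- If `A` and `B` say whether `s` and `t` fix a point, then `IsShortest A B g` says that no shorter
element than `g` moves the point to the same place. -/
def IsShortest (A B : Prop) (g : PentagonGroup) : Prop :=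
  (A → ¬ length (g * s) < length g) ∧ (B → ¬ length (g * t) < length g)

instance (A B : Prop) [Decidable A] [Decidable B] : DecidablePred (IsShortest A B) :=
  fun _ ↦ instDecidableAnd

theorem IsShortest.symm {A B : Prop} {g : PentagonGroup} (hg : IsShortest A B g) :
    IsShortest B A (swap g) := by
  have hs : ∀ g, length (swap g * s) < length (swap g) → length (g * t) < length g := by decide
  have ht : ∀ g, length (swap g * t) < length (swap g) → length (g * s) < length g := by decide
  exact ⟨fun h h' ↦ hg.2 h (hs g h'), fun h h' ↦ hg.1 h (ht g h')⟩

theorem IsShortest.eq {A B : Prop} {g g' : PentagonGroup} (hg : IsShortest A B g)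
    (hg' : IsShortest A B g') (hA : A ∨ g⁻¹ * g' = 1 ∨ g⁻¹ * g' = t)
    (hB : B ∨ g⁻¹ * g' = 1 ∨ g⁻¹ * g' = s) : g = g' := by
  have key : ∀ A B : Bool, ∀ g g', IsShortest A B g → IsShortest A B g' →
      (A ∨ g⁻¹ * g' = 1 ∨ g⁻¹ * g' = t) → (B ∨ g⁻¹ * g' = 1 ∨ g⁻¹ * g' = s) → g = g' := by decide
  classical
  exact key (decide A) (decide B) g g' (by simpa using hg) (by simpa using hg') (by simpa using hA)
    (by simpa using hB)

theorem swap_swap : ∀ g, swap (swap g) = g := by decide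

theorem swap_s : swap s = t := by decide

theorem swap_t : swap t = s := by decide

theorem exists_length_mul_lt :
    ∀ g, g ≠ 1 → length (g * s) < length g ∨ length (g * t) < length g := by
  decide

theorem rootCoeff_one (p q : ℝ) : rootCoeff 1 p q = 0 := by
  simp [rootCoeff, show rootCoeffLeft 1 = 0 from rfl, show rootCoeffRight 1 = 0 from rfl]

theorem rootCoeff_s (p q : ℝ) : rootCoeff s p q = p := by
  simp [rootCoeff, show rootCoeffLeft s = 1 from rfl, show rootCoeffRight s = 0 from rfl]

theorem rootCoeff_t (p q : ℝ) : rootCoeff t p q = 0 := by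
  simp [rootCoeff, show rootCoeffLeft t = 0 from rfl, show rootCoeffRight t = 0 from rfl]

theorem rootCoeff_s_mul (g : PentagonGroup) (p q : ℝ) :
    rootCoeff (s * g) p q = p - rootCoeff g p q + φ * rootCoeff (swap g) q p := by
  have hleft : ∀ g, rootCoeffLeft (s * g) =
      1 - rootCoeffLeft g + ⟨0, 1⟩ * rootCoeffRight (swap g) := by decide
  have hright : ∀ g, rootCoeffRight (s * g) =
      -rootCoeffRight g + ⟨0, 1⟩ * rootCoeffLeft (swap g) := by decide
  have hφ : toReal ⟨0, 1⟩ = φ := by simp [toReal_apply]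
  simp only [rootCoeff, hleft, hright, map_add, map_sub, map_neg, map_mul, map_one, hφ]
  ring

theorem rootCoeff_swap_s_mul (g : PentagonGroup) (p q : ℝ) :
    rootCoeff (swap (s * g)) q p = rootCoeff (swap g) q p := by
  have hleft : ∀ g, rootCoeffLeft (swap (s * g)) = rootCoeffLeft (swap g) := by decide
  have hright : ∀ g, rootCoeffRight (swap (s * g)) = rootCoeffRight (swap g) := by decide
  simp only [rootCoeff, hleft, hright]

theorem rootCoeff_mul_s (g : PentagonGroup) (q : ℝ) : rootCoeff (g * s) 0 q = rootCoeff g 0 q := by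
  have hright : ∀ g, rootCoeffRight (g * s) = rootCoeffRight g := by decide
  simp only [rootCoeff, mul_zero, hright]

theorem rootCoeff_mul_t (g : PentagonGroup) (p : ℝ) : rootCoeff (g * t) p 0 = rootCoeff g p 0 := by
  have hleft : ∀ g, rootCoeffLeft (g * t) = rootCoeffLeft g := by decide
  simp only [rootCoeff, mul_zero, hleft]

theorem mirror_induction {P : PentagonGroup → Prop} (one : P 1) (s_mul : ∀ g, P g → P (s * g))
    (t_mul : ∀ g, P g → P (t * g)) (g : PentagonGroup) : P g := by
  have hlength : ∀ g, g ≠ 1 → length (s * g) < length g ∨ length (t * g) < length g := by decide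
  have hs : ∀ g, s * (s * g) = g := by decide
  have ht : ∀ g, t * (t * g) = g := by decide
  induction hn : length g using Nat.strong_induction_on generalizing g with
  | _ n ih =>
    obtain rfl | h1 := eq_or_ne g 1
    · exact one
    · rcases hlength g h1 with h | h
      · exact hs g ▸ s_mul _ (ih _ (hn ▸ h) _ rfl)
      · exact ht g ▸ t_mul _ (ih _ (hn ▸ h) _ rfl)

theorem rootCoeff_t_mul (g : PentagonGroup) (p q : ℝ) :
    rootCoeff (t * g) p q = rootCoeff g p q := by
  simpa only [map_mul, swap_s, swap_swap] using rootCoeff_swap_s_mul (swap g) q p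

theorem rootCoeff_swap_t_mul (g : PentagonGroup) (p q : ℝ) :
    rootCoeff (swap (t * g)) q p = q - rootCoeff (swap g) q p + φ * rootCoeff g p q := by
  rw [map_mul, swap_t, rootCoeff_s_mul, swap_swap]

theorem rootCoeff_inv_mul_eq_zero {p q : ℝ} {g g' : PentagonGroup}
    (h : rootCoeff g p q = rootCoeff g' p q)
    (hswap : rootCoeff (swap g) q p = rootCoeff (swap g') q p) :
    rootCoeff (g⁻¹ * g') p q = 0 ∧ rootCoeff (swap (g⁻¹ * g')) q p = 0 := by
  induction g using mirror_induction generalizing g' with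
  | one => rw [inv_one, one_mul, ← h, ← hswap, map_one, rootCoeff_one, rootCoeff_one, and_self]
  | s_mul g ih =>
    rw [mul_inv_rev, mul_assoc]
    refine @ih (s * g') ?_ ?_
    · rw [rootCoeff_s_mul, ← h, ← hswap, rootCoeff_s_mul, rootCoeff_swap_s_mul]
      ring
    · rw [rootCoeff_swap_s_mul, ← hswap, rootCoeff_swap_s_mul]
  | t_mul g ih =>
    rw [mul_inv_rev, mul_assoc]
    refine @ih (t * g') ?_ ?_
    · rw [rootCoeff_t_mul, ← h, rootCoeff_t_mul]
    · rw [rootCoeff_swap_t_mul, ← h, ← hswap, rootCoeff_swap_t_mul, rootCoeff_t_mul]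
      ring

section Nonneg

variable {p q : ℝ} (hp : 0 ≤ p) (hq : 0 ≤ q)
include hp hq

theorem rootCoeff_nonneg (g : PentagonGroup) : 0 ≤ rootCoeff g p q := by
  have hleft : ∀ g, BracketLE 0 (rootCoeffLeft g) := by decide
  have hright : ∀ g, BracketLE 0 (rootCoeffRight g) := by decide
  have := (hleft g).toReal_le
  have := (hright g).toReal_le
  simp only [map_zero] at *
  unfold rootCoeff
  positivity

theorem le_rootCoeff {g : PentagonGroup} (h1 : g ≠ 1) (ht : g ≠ t) : p ≤ rootCoeff g p q := by
  have hleft : ∀ g, g ≠ 1 → g ≠ t → BracketLE 1 (rootCoeffLeft g) := by decide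
  have hright : ∀ g, BracketLE 0 (rootCoeffRight g) := by decide
  have hl := (hleft g h1 ht).toReal_le
  have hr := (hright g).toReal_le
  rw [map_one] at hl
  rw [map_zero] at hr
  exact le_add_of_le_of_nonneg (le_mul_of_one_le_left hp hl) (mul_nonneg hr hq)

theorem le_rootCoeff_swap {g : PentagonGroup} (h1 : g ≠ 1) (hs : g ≠ s) :
    q ≤ rootCoeff (swap g) q p :=
  le_rootCoeff hq hp (by simpa using h1) fun h ↦ hs (swap.injective (h.trans swap_s.symm))

theorem rootCoeff_le_rootCoeff_s_mul {g : PentagonGroup} (hg : length g < length (s * g)) :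
    rootCoeff g p q ≤ rootCoeff (s * g) p q := by
  have hleft : ∀ g, length g < length (s * g) →
      BracketLE (rootCoeffLeft g) (rootCoeffLeft (s * g)) := by decide
  have hright : ∀ g, length g < length (s * g) →
      BracketLE (rootCoeffRight g) (rootCoeffRight (s * g)) := by decide
  unfold rootCoeff
  gcongr
  exacts [(hleft g hg).toReal_le, (hright g hg).toReal_le]

theorem le_rootCoeff_swap_of_descent_s {g : PentagonGroup} (hg : length (g * s) < length g)
    (hs : g ≠ s) : p ≤ rootCoeff (swap g) q p := by
  have hleft : ∀ g, BracketLE 0 (rootCoeffLeft g) := by decide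
  have hright : ∀ g, length (g * s) < length g → g ≠ s →
      BracketLE 1 (rootCoeffRight (swap g)) := by decide
  have hl := (hleft (swap g)).toReal_le
  have hr := (hright g hg hs).toReal_le
  rw [map_one] at hr
  rw [map_zero] at hl
  exact le_add_of_nonneg_of_le (mul_nonneg hl hq) (le_mul_of_one_le_left hp hr)

theorem le_rootCoeff_of_descent_t {g : PentagonGroup} (hg : length (g * t) < length g)
    (ht : g ≠ t) : q ≤ rootCoeff g p q := by
  have hlength : ∀ g, length (g * t) < length g → length (swap g * s) < length (swap g) := by decide
  simpa only [swap_swap] using le_rootCoeff_swap_of_descent_s hq hp (hlength g hg)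
    fun h ↦ ht (swap.injective (h.trans swap_t.symm))

theorem rootCoeff_pos {g : PentagonGroup} (hg : IsShortest (p = 0) (q = 0) g) (h1 : g ≠ 1)
    (hs : g ≠ s) (ht : g ≠ t) : 0 < rootCoeff g p q ∧ 0 < rootCoeff (swap g) q p := by
  rcases exists_length_mul_lt g h1 with h | h
  · have hpos : 0 < p := hp.lt_of_ne' fun h0 ↦ hg.1 h0 h
    exact ⟨hpos.trans_le (le_rootCoeff hp hq h1 ht),
      hpos.trans_le (le_rootCoeff_swap_of_descent_s hp hq h hs)⟩
  · have hpos : 0 < q := hq.lt_of_ne' fun h0 ↦ hg.2 h0 h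
    exact ⟨hpos.trans_le (le_rootCoeff_of_descent_t hp hq h ht),
      hpos.trans_le (le_rootCoeff_swap hp hq h1 hs)⟩

theorem eq_of_rootCoeff_inv_mul_eq_zero {g g' : PentagonGroup} (hg : IsShortest (p = 0) (q = 0) g)
    (hg' : IsShortest (p = 0) (q = 0) g') (h : rootCoeff (g⁻¹ * g') p q = 0)
    (hswap : rootCoeff (swap (g⁻¹ * g')) q p = 0) : g = g' := by
  refine hg.eq hg' ?_ ?_
  · by_contra! hu
    exact hu.1 (hp.antisymm' (h ▸ le_rootCoeff hp hq hu.2.1 hu.2.2))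
  · by_contra! hu
    exact hu.1 (hq.antisymm' (hswap ▸ le_rootCoeff_swap hp hq hu.2.1 hu.2.2))

end Nonneg

section RootCoeffs

variable {T : Type*} [DecidableEq T]

/-- The pair of coefficients `rootCoeff g p q` and `rootCoeff (swap g) q p` of the roots of two
mirrors `i` and `j`, as a function on all mirrors. -/
def rootCoeffs (i j : T) (g : PentagonGroup) (p q : ℝ) : T → ℝ :=
  Pi.single i (rootCoeff g p q) + Pi.single j (rootCoeff (swap g) q p)

theorem rootCoeffs_swap (i j : T) (g : PentagonGroup) (p q : ℝ) :
    rootCoeffs j i (swap g) q p = rootCoeffs i j g p q := by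
  rw [rootCoeffs, rootCoeffs, swap_swap, add_comm]

theorem rootCoeffs_one (i j : T) (p q : ℝ) : rootCoeffs i j 1 p q = 0 := by
  simp [rootCoeffs, rootCoeff_one]

theorem rootCoeffs_s (i j : T) (p q : ℝ) : rootCoeffs i j s p q = Pi.single i p := by
  simp [rootCoeffs, rootCoeff_s, swap_s, rootCoeff_t]

theorem rootCoeffs_add (i j : T) (g : PentagonGroup) (p q p' q' : ℝ) :
    rootCoeffs i j g p q + rootCoeffs i j g p' q' = rootCoeffs i j g (p + p') (q + q') := by
  simp only [rootCoeffs, rootCoeff, mul_add, Pi.single_add]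
  abel

theorem rootCoeffs_nonneg {p q : ℝ} (hp : 0 ≤ p) (hq : 0 ≤ q) {i j : T} (g : PentagonGroup) :
    0 ≤ rootCoeffs i j g p q :=
  add_nonneg (Pi.single_nonneg.2 (rootCoeff_nonneg hp hq g))
    (Pi.single_nonneg.2 (rootCoeff_nonneg hq hp (swap g)))

theorem support_rootCoeffs {p q : ℝ} (hp : 0 ≤ p) (hq : 0 ≤ q) {i j : T} (hij : i ≠ j)
    {g : PentagonGroup} (hg : IsShortest (p = 0) (q = 0) g) (h1 : g ≠ 1) (hs : g ≠ s)
    (ht : g ≠ t) : Function.support (rootCoeffs i j g p q) = {i, j} := by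
  obtain ⟨hi, hj⟩ := rootCoeff_pos hp hq hg h1 hs ht
  ext k
  by_cases hki : k = i <;> by_cases hkj : k = j <;>
    simp_all [rootCoeffs, hi.ne', hj.ne', hij.symm]

theorem rootCoeffs_injOn {p q : ℝ} (hp : 0 ≤ p) (hq : 0 ≤ q) {i j : T} (hij : i ≠ j) :
    Set.InjOn (fun g ↦ rootCoeffs i j g p q) {g | IsShortest (p = 0) (q = 0) g} := by
  intro g hg g' hg' heq
  have hleft := congrFun heq i
  have hright := congrFun heq j
  simp only [rootCoeffs, Pi.add_apply, Pi.single_eq_same, Pi.single_eq_of_ne hij,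
    Pi.single_eq_of_ne hij.symm, add_zero, zero_add] at hleft hright
  obtain ⟨hu, hu'⟩ := rootCoeff_inv_mul_eq_zero hleft hright
  exact eq_of_rootCoeff_inv_mul_eq_zero hp hq hg hg' hu hu'

end RootCoeffs

theorem goldenRatio_sq_le_pairing {p q : ℝ} (hp : p = 0 ∨ φ ≤ p) (hq : q = 0 ∨ φ ≤ q)
    {g : PentagonGroup} (h1 : g ≠ 1) (hs : p = 0 → g ≠ s) (ht : q = 0 → g ≠ t)
    (hpq : p ≠ 0 ∨ q ≠ 0) :
    φ ^ 2 ≤ rootCoeff g p q * p + rootCoeff (swap g) q p * q := by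
  have hφ := Real.goldenRatio_pos
  have hp0 : 0 ≤ p := by rcases hp with rfl | hp <;> linarith
  have hq0 : 0 ≤ q := by rcases hq with rfl | hq <;> linarith
  have hc := rootCoeff_nonneg hp0 hq0 g
  have hc' := rootCoeff_nonneg hq0 hp0 (swap g)
  by_cases h : p ≠ 0 ∧ g ≠ t
  · have := le_rootCoeff hp0 hq0 h1 h.2
    have := hp.resolve_left h.1
    nlinarith [mul_nonneg hc' hq0]
  · have hqp : q ≠ 0 := by grind
    have hgs : g ≠ s := by
      have : s ≠ t := by decide
      grind
    have := le_rootCoeff_swap hp0 hq0 h1 hgs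
    have := hq.resolve_left hqp
    nlinarith [mul_nonneg hc hp0]

theorem card_filter_isShortest (A B : Prop) [Decidable A] [Decidable B] :
    #{g : PentagonGroup | (g ≠ 1 ∧ g ≠ s ∧ g ≠ t) ∧ IsShortest A B g} + 4 * (if A then 1 else 0) +
      4 * (if B then 1 else 0) = 7 + if A ∧ B then 1 else 0 := by
  by_cases hA : A <;> by_cases hB : B <;> simp only [IsShortest, hA, hB] <;> decide

end PentagonGroup

/-! ### Mirror systems -/

section Mirror

open PentagonGroup

variable {V : Type*} [AddCommGroup V] [Module ℝ V] (B : LinearMap.BilinForm ℝ V) (κ : ℝ)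

/-- The reflection `z ↦ z - κ B(a, z) a` in the mirror orthogonal to `a`, for `κ B(a, a) = 2`. -/
def mirror (a z : V) : V := z - (κ * B a z) • a

/-- The height of `z` over the mirror orthogonal to `a`, measured on the side away from `a`. -/
def height (a z : V) : ℝ := -B a z

/-- The action on `V` of the group generated by two mirrors at angle `π / 5`, with roots `a` and
`b`. -/
def pentagonAct (a b : V) (g : PentagonGroup) (z : V) : V :=
  z + (κ * rootCoeff g (height B a z) (height B b z)) • a +
    (κ * rootCoeff (swap g) (height B b z) (height B a z)) • b

theorem pentagonAct_swap (a b : V) (g : PentagonGroup) (z : V) :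
    pentagonAct B κ b a (swap g) z = pentagonAct B κ a b g z := by
  rw [pentagonAct, pentagonAct, swap_swap, add_right_comm]

theorem pentagonAct_one (a b z : V) : pentagonAct B κ a b 1 z = z := by
  simp [pentagonAct, rootCoeff_one]

variable {B κ}

theorem form_mirror_mirror (hB : B.IsSymm) {a : V} (ha : κ * B a a = 2) (z w : V) :
    B (mirror B κ a z) (mirror B κ a w) = B z w := by
  simp only [mirror, map_sub, map_smul, LinearMap.sub_apply, LinearMap.smul_apply, smul_eq_mul,
    hB.eq z a]
  linear_combination κ * B a z * B a w * ha

theorem mirror_pentagonAct {a b : V} (ha : κ * B a a = 2) (hab : κ * B a b = -φ)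
    (g : PentagonGroup) (z : V) :
    mirror B κ a (pentagonAct B κ a b g z) = pentagonAct B κ a b (s * g) z := by
  have hcoeff : κ * rootCoeff g (height B a z) (height B b z) -
      κ * B a (pentagonAct B κ a b g z) =
      κ * rootCoeff (s * g) (height B a z) (height B b z) := by
    rw [rootCoeff_s_mul]
    simp only [pentagonAct, map_add, map_smul, smul_eq_mul]
    simp only [height]
    linear_combination (-κ * rootCoeff g (-B a z) (-B b z)) * ha -
      (κ * rootCoeff (swap g) (-B b z) (-B a z)) * hab
  rw [mirror]
  nth_rw 3 [pentagonAct]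
  rw [rootCoeff_swap_s_mul, ← hcoeff, sub_smul]
  nth_rw 1 [pentagonAct]
  abel

theorem mirror_pentagonAct_swap (hB : B.IsSymm) {a b : V} (hb : κ * B b b = 2)
    (hab : κ * B a b = -φ) (g : PentagonGroup) (z : V) :
    mirror B κ b (pentagonAct B κ a b g z) = pentagonAct B κ a b (t * g) z := by
  have hswap : swap (t * g) = s * swap g := by rw [map_mul, swap_t]
  rw [← pentagonAct_swap, mirror_pentagonAct hb (hB.eq a b ▸ hab), ← hswap, pentagonAct_swap]

variable (hB : B.IsSymm) {a b : V} (ha : κ * B a a = 2) (hb : κ * B b b = 2) (hab : κ * B a b = -φ)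
include hB ha hb hab

theorem form_pentagonAct_pentagonAct (g h : PentagonGroup) (z w : V) :
    B (pentagonAct B κ a b g z) (pentagonAct B κ a b h w) =
      B z (pentagonAct B κ a b (g⁻¹ * h) w) := by
  have hs : s⁻¹ = s := rfl
  have ht : t⁻¹ = t := rfl
  induction g using mirror_induction generalizing h with
  | one => rw [pentagonAct_one, inv_one, one_mul]
  | s_mul g ih =>
    have hh : h = s * (s * h) := by rw [← mul_assoc]; exact (one_mul h).symm
    rw [mul_inv_rev, hs, mul_assoc, ← ih, hh, ← mirror_pentagonAct ha hab,
      ← mirror_pentagonAct ha hab, form_mirror_mirror hB ha, ← hh]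
  | t_mul g ih =>
    have hh : h = t * (t * h) := by rw [← mul_assoc]; exact (one_mul h).symm
    rw [mul_inv_rev, ht, mul_assoc, ← ih, hh, ← mirror_pentagonAct_swap hB hb hab,
      ← mirror_pentagonAct_swap hB hb hab, form_mirror_mirror hB hb, ← hh]

end Mirror

/-- Unit vectors `ball x` of Lorentz space representing a packing of balls, together with one mirror
for each ball in the left summand. The mirror of `i` cuts off the ball of `i`, is orthogonal to its
neighbours and avoids all other balls; two mirrors that meet enclose an angle at most `π / 5`. -/
structure MirrorSystem (V T S : Type*) [AddCommGroup V] [Module ℝ V] where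
  form : LinearMap.BilinForm ℝ V
  form_isSymm : form.IsSymm
  scale : ℝ
  two_le_scale : 2 ≤ scale
  ball : T ⊕ S → V
  root : T → V
  form_ball_self (x : T ⊕ S) : form (ball x) (ball x) = 1
  form_ball_le {x y : T ⊕ S} : x ≠ y → form (ball x) (ball y) ≤ -1
  form_root_self (i : T) : scale * form (root i) (root i) = 2
  form_root_le {i j : T} : i ≠ j → scale * form (root i) (root j) ≤ -φ
  height_self (i : T) : height form (root i) (ball (.inl i)) = -1
  height_eq_zero_or {i : T} {x : T ⊕ S} :
    x ≠ .inl i → height form (root i) (ball x) = 0 ∨ φ ≤ height form (root i) (ball x)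
  le_height_inl {i j : T} : j ≠ i → φ ≤ height form (root i) (ball (.inl j))

namespace MirrorSystem

variable {V T S : Type*} [AddCommGroup V] [Module ℝ V] (M : MirrorSystem V T S)

/-- The height of a ball over a mirror. -/
def ballHeight (i : T) (x : T ⊕ S) : ℝ := height M.form (M.root i) (M.ball x)

/-- Two mirrors are adjacent if they enclose the angle `π / 5`. -/
def Adj (i j : T) : Prop := M.scale * M.form (M.root i) (M.root j) = -φ

theorem Adj.symm {M : MirrorSystem V T S} {i j : T} (h : M.Adj i j) : M.Adj j i := by
  rwa [Adj, M.form_isSymm.eq]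

theorem not_adj_self (i : T) : ¬ M.Adj i i := fun h ↦ by
  linarith [Real.goldenRatio_pos, M.form_root_self i, show _ = _ from h]

theorem Adj.ne {M : MirrorSystem V T S} {i j : T} (h : M.Adj i j) : i ≠ j := by
  rintro rfl
  exact M.not_adj_self i h

theorem neg_one_le_ballHeight (i : T) (x : T ⊕ S) : -1 ≤ M.ballHeight i x := by
  obtain rfl | hx := eq_or_ne x (.inl i)
  · exact (M.height_self i).ge
  · rcases M.height_eq_zero_or hx with h | h <;> rw [ballHeight] <;>
      linarith [Real.goldenRatio_pos]

theorem ballHeight_nonneg {i : T} {x : T ⊕ S} (hx : x ≠ .inl i) : 0 ≤ M.ballHeight i x := by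
  rcases M.height_eq_zero_or hx with h | h <;> rw [ballHeight] <;> linarith [Real.goldenRatio_pos]

variable [Fintype T]

/-- The image of the ball `z.1` in a chamber of the group generated by the mirrors. The image is
indexed by the coefficients `z.2` of the roots in its difference from `z.1`. -/
def image (z : (T ⊕ S) × (T → ℝ)) : V := M.ball z.1 + M.scale • ∑ i, z.2 i • M.root i

theorem form_image_left (z : (T ⊕ S) × (T → ℝ)) (v : V) :
    M.form (M.image z) v =
      M.form (M.ball z.1) v - M.scale * ∑ i, z.2 i * height M.form (M.root i) v := by
  simp [image, height, sub_neg_eq_add]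

theorem form_ball_image (x : T ⊕ S) (z : (T ⊕ S) × (T → ℝ)) :
    M.form (M.ball x) (M.image z) =
      M.form (M.ball x) (M.ball z.1) - M.scale * ∑ i, z.2 i * M.ballHeight i x := by
  rw [← M.form_isSymm.eq, form_image_left, M.form_isSymm.eq]
  rfl

theorem form_ball_image_self (z : (T ⊕ S) × (T → ℝ)) :
    M.form (M.ball z.1) (M.image z) = 1 - M.scale * ∑ i, z.2 i * M.ballHeight i z.1 := by
  rw [form_ball_image, M.form_ball_self]

/-- The inequalities needed for an image of a ball to avoid all images in unrelated chambers. -/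
structure Placed (z : (T ⊕ S) × (T → ℝ)) : Prop where
  nonneg (i : T) : 0 ≤ z.2 i
  eq_zero_of_eq_inl {i : T} : z.1 = .inl i → z.2 i = 0
  le_sum_of_eq_inl {i : T} : z.1 = .inl i → φ ≤ ∑ j, z.2 j
  le_sum_mul_height : z.2 = 0 ∨ φ ^ 2 ≤ ∑ i, z.2 i * M.ballHeight i z.1

variable {M}

theorem le_height_image {z : (T ⊕ S) × (T → ℝ)} (hz : ∀ i, 0 ≤ z.2 i) {m : T} (hm : z.2 m = 0) :
    M.ballHeight m z.1 + φ * ∑ i, z.2 i ≤ height M.form (M.root m) (M.image z) := by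
  have hsum : φ * ∑ i, z.2 i ≤ ∑ i, -(z.2 i * (M.scale * M.form (M.root m) (M.root i))) := by
    rw [mul_sum]
    refine sum_le_sum fun i _ ↦ ?_
    obtain rfl | hs := eq_or_ne m i
    · simp [hm]
    · nlinarith [hz i, M.form_root_le hs]
  have heq : height M.form (M.root m) (M.image z) =
      M.ballHeight m z.1 + ∑ i, -(z.2 i * (M.scale * M.form (M.root m) (M.root i))) := by
    simp only [height, ballHeight, image, map_add, map_smul, map_sum, smul_eq_mul, mul_sum,
      sum_neg_distrib, mul_left_comm, neg_add]
  rw [heq]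
  gcongr

/-- If `z` lies on the far side of none of the mirrors crossed by `w`, then folding `w` back
increases the form. -/
theorem form_image_le {z w : (T ⊕ S) × (T → ℝ)} (hw : ∀ i, 0 ≤ w.2 i)
    (h : ∀ i, w.2 i = 0 ∨ 0 ≤ height M.form (M.root i) (M.image z)) :
    M.form (M.image w) (M.image z) ≤ M.form (M.ball w.1) (M.image z) := by
  rw [form_image_left, sub_le_self_iff]
  refine mul_nonneg (by linarith [M.two_le_scale]) (sum_nonneg fun i _ ↦ ?_)
  rcases h i with h | h
  · simp [h]
  · exact mul_nonneg (hw i) h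

theorem Placed.height_image_nonneg {z : (T ⊕ S) × (T → ℝ)} (hz : M.Placed z) {m : T}
    (hm : z.2 m = 0) : 0 ≤ height M.form (M.root m) (M.image z) := by
  refine le_trans ?_ (le_height_image hz.nonneg hm)
  have hsum : 0 ≤ ∑ i, z.2 i := sum_nonneg fun i _ ↦ hz.nonneg i
  obtain hx | hx := eq_or_ne z.1 (.inl m)
  · nlinarith [hz.le_sum_of_eq_inl hx, M.neg_one_le_ballHeight m z.1, Real.one_lt_goldenRatio]
  · have := M.ballHeight_nonneg hx
    have := Real.goldenRatio_pos
    positivity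

theorem form_image_le_of_disjoint {w z : (T ⊕ S) × (T → ℝ)} (hw : M.Placed w) (hz : M.Placed z)
    (h : ∀ i, w.2 i = 0 ∨ z.2 i = 0) :
    M.form (M.image w) (M.image z) ≤ M.form (M.ball w.1) (M.image z) :=
  form_image_le hw.nonneg fun i ↦ (h i).imp_right hz.height_image_nonneg

theorem form_image_le_mul_sum {w z : (T ⊕ S) × (T → ℝ)} (hw : M.Placed w) (hz : M.Placed z)
    (h : ∀ i, w.2 i = 0 ∨ z.2 i = 0) :
    M.form (M.image w) (M.image z) ≤ M.form (M.ball w.1) (M.ball z.1) -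
      M.scale * (φ * (∑ i, w.2 i) * (∑ i, z.2 i) - ∑ i, w.2 i - ∑ i, z.2 i) := by
  have hleft : ∑ i, w.2 i * (φ * (∑ i, z.2 i) - 1) ≤
      ∑ i, w.2 i * height M.form (M.root i) (M.image z) := by
    refine sum_le_sum fun i _ ↦ ?_
    rcases h i with hs | hs
    · simp [hs]
    · refine mul_le_mul_of_nonneg_left ?_ (hw.nonneg i)
      linarith [le_height_image (M := M) hz.nonneg hs, M.neg_one_le_ballHeight i z.1]
  have hright : ∑ i, z.2 i * (-1) ≤ ∑ i, z.2 i * M.ballHeight i w.1 := by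
    gcongr with i
    exacts [hz.nonneg i, M.neg_one_le_ballHeight i w.1]
  rw [form_image_left, form_ball_image]
  rw [← sum_mul] at hleft hright
  nlinarith [mul_le_mul_of_nonneg_left (add_le_add hleft hright)
    (zero_le_two.trans M.two_le_scale)]

theorem form_image_le_of_avoid {w z : (T ⊕ S) × (T → ℝ)} (hw : M.Placed w) (hz : M.Placed z)
    (h : ∀ i, w.2 i = 0 ∨ z.2 i = 0) (hwz : w ≠ z) (hne : ∀ i, w.1 = .inl i → z.2 i = 0) :
    M.form (M.image w) (M.image z) ≤ -1 := by
  have hscale := M.two_le_scale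
  have hφ := Real.one_lt_goldenRatio
  have hfar : ∀ v : (T ⊕ S) × (T → ℝ), φ ^ 2 ≤ ∑ i, v.2 i * M.ballHeight i v.1 →
      M.form (M.ball v.1) (M.image v) ≤ -1 := fun v hv ↦ by
    rw [form_ball_image_self]
    nlinarith
  by_cases hxy : w.1 = z.1
  · rcases hz.le_sum_mul_height with hz0 | hz0
    · rw [← M.form_isSymm.eq]
      refine (form_image_le_of_disjoint hz hw fun i ↦ (h i).symm).trans ?_
      rw [← hxy]
      refine hfar w (hw.le_sum_mul_height.resolve_left fun hw0 ↦ hwz ?_)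
      exact Prod.ext hxy (hw0.trans hz0.symm)
    · exact (form_image_le_of_disjoint hw hz h).trans (hxy ▸ hfar z hz0)
  · refine (form_image_le_of_disjoint hw hz h).trans ?_
    rw [form_ball_image]
    have hsum : 0 ≤ ∑ i, z.2 i * M.ballHeight i w.1 := sum_nonneg fun i _ ↦ by
      by_cases hs : w.1 = .inl i
      · rw [hne i hs, zero_mul]
      · exact mul_nonneg (hz.nonneg i) (M.ballHeight_nonneg hs)
    nlinarith [M.form_ball_le hxy]

theorem Placed.form_image_le_neg_one {w z : (T ⊕ S) × (T → ℝ)} (hw : M.Placed w) (hz : M.Placed z)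
    (h : ∀ i, w.2 i = 0 ∨ z.2 i = 0) (hwz : w ≠ z) : M.form (M.image w) (M.image z) ≤ -1 := by
  by_cases hwin : ∀ i, w.1 = .inl i → z.2 i = 0
  · exact form_image_le_of_avoid hw hz h hwz hwin
  by_cases hzin : ∀ i, z.1 = .inl i → w.2 i = 0
  · rw [← M.form_isSymm.eq]
    exact form_image_le_of_avoid hz hw (fun i ↦ (h i).symm) hwz.symm hzin
  push Not at hwin hzin
  obtain ⟨m, hm, hzm⟩ := hwin
  obtain ⟨n, hn, -⟩ := hzin
  have hne : w.1 ≠ z.1 := fun h ↦ hzm (hz.eq_zero_of_eq_inl (h ▸ hm))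
  have hW := hw.le_sum_of_eq_inl hm
  have hZ := hz.le_sum_of_eq_inl hn
  have hpos : 0 ≤ φ * (∑ i, w.2 i) * (∑ i, z.2 i) - ∑ i, w.2 i - ∑ i, z.2 i := by
    have hφ := Real.one_lt_goldenRatio
    have := Real.goldenRatio_sq
    nlinarith [mul_nonneg (sub_nonneg.2 hW) (sub_nonneg.2 hZ)]
  nlinarith [form_image_le_mul_sum hw hz h, M.form_ball_le hne, M.two_le_scale]

end MirrorSystem

namespace MirrorSystem

open PentagonGroup

variable {V T S : Type*} [AddCommGroup V] [Module ℝ V] (M : MirrorSystem V T S)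
variable [DecidableEq T]

/-- The image of the ball `x` under the element `g` of the group generated by the mirrors of `i` and
`j`, as an index for `MirrorSystem.image`. -/
def copy (i j : T) (g : PentagonGroup) (x : T ⊕ S) : (T ⊕ S) × (T → ℝ) :=
  (x, rootCoeffs i j g (M.ballHeight i x) (M.ballHeight j x))

/-- The ball `x` is kept in the image of the initial packing under `g`. Discarded are the balls of
`i` and `j`, and in addition all balls replaced by mirrors for `g = 1`, and those replaced by
mirrors adjacent to `i` for `g = s` and to `j` for `g = t`, since these mirrors cut the images. -/
structure Kept (i j : T) (g : PentagonGroup) (x : T ⊕ S) : Prop where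
  ne_left : x ≠ .inl i
  ne_right : x ≠ .inl j
  ne_one {k : T} : x = .inl k → g ≠ 1
  ne_s {k : T} : x = .inl k → M.Adj i k → g ≠ s
  ne_t {k : T} : x = .inl k → M.Adj j k → g ≠ t

theorem copy_swap (i j : T) (g : PentagonGroup) (x : T ⊕ S) :
    M.copy j i (swap g) x = M.copy i j g x := by
  rw [copy, copy, rootCoeffs_swap]

theorem copy_one (i j : T) (x : T ⊕ S) : M.copy i j 1 x = (x, 0) := by
  rw [copy, rootCoeffs_one]

theorem copy_s (i j : T) (x : T ⊕ S) : M.copy i j s x = (x, Pi.single i (M.ballHeight i x)) := by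
  rw [copy, rootCoeffs_s]

theorem copy_t (i j : T) (x : T ⊕ S) : M.copy i j t x = (x, Pi.single j (M.ballHeight j x)) := by
  rw [← copy_swap, swap_t, copy_s]

theorem copy_mul_s (i j : T) (g : PentagonGroup) {x : T ⊕ S} (hx : M.ballHeight i x = 0) :
    M.copy i j (g * s) x = M.copy i j g x := by
  rw [copy, copy, rootCoeffs, rootCoeffs, map_mul, swap_s, hx, rootCoeff_mul_s, rootCoeff_mul_t]

theorem copy_mul_t (i j : T) (g : PentagonGroup) {x : T ⊕ S} (hx : M.ballHeight j x = 0) :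
    M.copy i j (g * t) x = M.copy i j g x := by
  rw [← copy_swap, map_mul, swap_t, copy_mul_s _ _ _ _ hx, copy_swap]

variable {M}

omit [DecidableEq T] in
theorem Kept.symm {i j : T} {g : PentagonGroup} {x : T ⊕ S} (h : M.Kept i j g x) :
    M.Kept j i (swap g) x where
  ne_left := h.ne_right
  ne_right := h.ne_left
  ne_one hx := by simpa using h.ne_one hx
  ne_s hx hadj hg := h.ne_t hx hadj (PentagonGroup.swap.injective (hg.trans swap_t.symm))
  ne_t hx hadj hg := h.ne_s hx hadj (PentagonGroup.swap.injective (hg.trans swap_s.symm))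

variable {i j : T}

theorem copy_apply_of_ne {k : T} (hki : k ≠ i) (hkj : k ≠ j) (g : PentagonGroup) (x : T ⊕ S) :
    (M.copy i j g x).2 k = 0 := by
  simp [copy, rootCoeffs, hki, hkj]

theorem copy_nonneg {x : T ⊕ S} (hxi : x ≠ .inl i) (hxj : x ≠ .inl j) (g : PentagonGroup) (k : T) :
    0 ≤ (M.copy i j g x).2 k :=
  rootCoeffs_nonneg (M.ballHeight_nonneg hxi) (M.ballHeight_nonneg hxj) g k

theorem copy_eq_or_le_pairing {g : PentagonGroup} {x : T ⊕ S} (hxi : x ≠ .inl i)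
    (hxj : x ≠ .inl j) :
    (∀ h : PentagonGroup, M.copy i j (h * g) x = M.copy i j h x) ∨
      φ ^ 2 ≤ rootCoeff g (M.ballHeight i x) (M.ballHeight j x) * M.ballHeight i x +
        rootCoeff (swap g) (M.ballHeight j x) (M.ballHeight i x) *
          M.ballHeight j x := by
  by_cases h1 : g = 1
  · exact .inl fun h ↦ by rw [h1, mul_one]
  by_cases hs : M.ballHeight i x = 0 ∧ g = s
  · exact .inl fun h ↦ by rw [hs.2, copy_mul_s _ _ _ _ hs.1]
  by_cases ht : M.ballHeight j x = 0 ∧ g = t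
  · exact .inl fun h ↦ by rw [ht.2, copy_mul_t _ _ _ _ ht.1]
  by_cases h0 : M.ballHeight i x = 0 ∧ M.ballHeight j x = 0
  · exact .inl fun h ↦ by simp [copy, rootCoeffs, h0, rootCoeff]
  · exact .inr (goldenRatio_sq_le_pairing (M.height_eq_zero_or hxi) (M.height_eq_zero_or hxj) h1
      (fun hp hg ↦ hs ⟨hp, hg⟩) (fun hq hg ↦ ht ⟨hq, hg⟩) (not_and_or.1 h0))

variable [Fintype T]

theorem sum_copy_mul (i j : T) (g : PentagonGroup) (x : T ⊕ S) (w : T → ℝ) :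
    ∑ k, (M.copy i j g x).2 k * w k =
      rootCoeff g (M.ballHeight i x) (M.ballHeight j x) * w i +
        rootCoeff (swap g) (M.ballHeight j x) (M.ballHeight i x) * w j := by
  simp [copy, rootCoeffs, add_mul, sum_add_distrib, Pi.single_apply]

theorem sum_copy (i j : T) (g : PentagonGroup) (x : T ⊕ S) :
    ∑ k, (M.copy i j g x).2 k =
      rootCoeff g (M.ballHeight i x) (M.ballHeight j x) +
        rootCoeff (swap g) (M.ballHeight j x) (M.ballHeight i x) := by
  simpa using sum_copy_mul i j g x 1

theorem image_copy (i j : T) (g : PentagonGroup) (x : T ⊕ S) :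
    M.image (M.copy i j g x) =
      pentagonAct M.form M.scale (M.root i) (M.root j) g (M.ball x) := by
  simp [image, copy, rootCoeffs, pentagonAct, add_smul, sum_add_distrib, Pi.single_apply,
    ite_smul, smul_smul, add_assoc, ballHeight]

theorem image_copy_one (i j : T) (x : T ⊕ S) : M.image (M.copy i j 1 x) = M.ball x := by
  rw [image_copy, pentagonAct_one]

theorem form_image_copy (hij : M.Adj i j) (g g' : PentagonGroup) (x y : T ⊕ S) :
    M.form (M.image (M.copy i j g x)) (M.image (M.copy i j g' y)) =
      M.form (M.ball x) (M.image (M.copy i j (g⁻¹ * g') y)) := by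
  simp only [image_copy]
  exact form_pentagonAct_pentagonAct M.form_isSymm (M.form_root_self i) (M.form_root_self j) hij ..

theorem form_ball_image_copy (i j : T) (g : PentagonGroup) (x y : T ⊕ S) :
    M.form (M.ball x) (M.image (M.copy i j g y)) = M.form (M.ball x) (M.ball y) -
      M.scale * (rootCoeff g (M.ballHeight i y) (M.ballHeight j y) * M.ballHeight i x +
        rootCoeff (swap g) (M.ballHeight j y) (M.ballHeight i y) *
          M.ballHeight j x) := by
  rw [form_ball_image, sum_copy_mul]
  rfl

theorem form_image_copy_s_mul (hij : M.Adj i j) {k : T} (hik : M.Adj i k) (g g' : PentagonGroup)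
    (x y : T ⊕ S) :
    M.form (M.image (M.copy i j (s * g) x)) (M.image (M.copy i k (s * g') y)) =
      M.form (M.image (M.copy i j g x)) (M.image (M.copy i k g' y)) := by
  simp only [image_copy, ← mirror_pentagonAct (M.form_root_self i) hij,
    ← mirror_pentagonAct (M.form_root_self i) hik]
  exact form_mirror_mirror M.form_isSymm (M.form_root_self i) _ _

theorem height_image_copy (hij : M.Adj i j) (g : PentagonGroup) (x : T ⊕ S) :
    height M.form (M.root i) (M.image (M.copy i j g x)) =
      rootCoeff (s * g) (M.ballHeight i x) (M.ballHeight j x) -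
        rootCoeff g (M.ballHeight i x) (M.ballHeight j x) := by
  have hself := M.form_root_self i
  rw [image_copy, rootCoeff_s_mul]
  simp only [height, pentagonAct, ballHeight, map_add, map_smul, smul_eq_mul]
  rw [Adj] at hij
  linear_combination
    -rootCoeff g (-M.form (M.root i) (M.ball x)) (-M.form (M.root j) (M.ball x)) * hself -
      rootCoeff (swap g) (-M.form (M.root j) (M.ball x)) (-M.form (M.root i) (M.ball x)) * hij

theorem form_image_copy_le (hij : M.Adj i j) {g g' : PentagonGroup} {x y : T ⊕ S}
    (hxi : x ≠ .inl i) (hxj : x ≠ .inl j) (hyi : y ≠ .inl i) (hyj : y ≠ .inl j)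
    (hne : M.copy i j g x ≠ M.copy i j g' y) :
    M.form (M.image (M.copy i j g x)) (M.image (M.copy i j g' y)) ≤ -1 := by
  have hscale := M.two_le_scale
  rw [form_image_copy hij, form_ball_image_copy]
  obtain rfl | hxy := eq_or_ne x y
  · rcases copy_eq_or_le_pairing (M := M) (g := g⁻¹ * g') hxi hxj with h | h
    · exact absurd (h g).symm (by simpa using hne)
    · rw [M.form_ball_self]
      nlinarith [Real.one_lt_goldenRatio]
  · have hxi := M.ballHeight_nonneg hxi
    have hxj := M.ballHeight_nonneg hxj
    have hyi := M.ballHeight_nonneg hyi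
    have hyj := M.ballHeight_nonneg hyj
    have hi := rootCoeff_nonneg hyi hyj (g⁻¹ * g')
    have hj := rootCoeff_nonneg hyj hyi (swap (g⁻¹ * g'))
    exact (sub_le_self _ (by positivity)).trans (M.form_ball_le hxy)

theorem Kept.placed_copy {g : PentagonGroup} {x : T ⊕ S} (h : M.Kept i j g x) :
    M.Placed (M.copy i j g x) where
  nonneg := copy_nonneg h.ne_left h.ne_right g
  eq_zero_of_eq_inl := by
    rintro k (rfl : x = _)
    exact copy_apply_of_ne (by simpa using h.ne_left) (by simpa using h.ne_right) g _
  le_sum_of_eq_inl := by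
    rintro k (rfl : x = _)
    have hi : φ ≤ M.ballHeight i (.inl k) := M.le_height_inl (by simpa using h.ne_left)
    have hj : φ ≤ M.ballHeight j (.inl k) := M.le_height_inl (by simpa using h.ne_right)
    have hi0 := Real.goldenRatio_pos.le.trans hi
    have hj0 := Real.goldenRatio_pos.le.trans hj
    rw [sum_copy]
    by_cases ht : g = t
    · subst ht
      exact le_add_of_nonneg_of_le (rootCoeff_nonneg hi0 hj0 t)
        (hj.trans (le_rootCoeff_swap hi0 hj0 (by decide) (by decide)))
    · exact le_add_of_le_of_nonneg (hi.trans (le_rootCoeff hi0 hj0 (h.ne_one rfl) ht))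
        (rootCoeff_nonneg hj0 hi0 _)
  le_sum_mul_height := by
    rw [sum_copy_mul]
    refine (copy_eq_or_le_pairing h.ne_left h.ne_right).imp_left fun hg ↦ ?_
    simpa only [one_mul, copy_one] using congrArg Prod.snd (hg 1)

theorem rootCoeff_le_height_image_copy {k : T} (hij : i ≠ j) (hjk : j ≠ k) {g : PentagonGroup}
    {y : T ⊕ S} (hyi : y ≠ .inl i) (hyk : y ≠ .inl k) (h1 : g ≠ 1) (hs : g ≠ s) :
    rootCoeff (swap g) (M.ballHeight k y) (M.ballHeight i y) ≤
      height M.form (M.root j) (M.image (M.copy i k g y)) := by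
  have hp := M.ballHeight_nonneg hyi
  have hq := M.ballHeight_nonneg hyk
  have hi := rootCoeff_nonneg hp hq g
  have hk := le_rootCoeff_swap hp hq h1 hs
  have hφ := Real.one_lt_goldenRatio
  refine le_trans ?_ (le_height_image (copy_nonneg hyi hyk g) (copy_apply_of_ne hij.symm hjk g y))
  rw [sum_copy, show (M.copy i k g y).1 = y from rfl]
  obtain rfl | hyj := eq_or_ne y (.inl j)
  · have hkj : φ ≤ M.ballHeight k (.inl j) := M.le_height_inl hjk
    have hjj : M.ballHeight j (.inl j) = -1 := M.height_self j
    nlinarith [Real.goldenRatio_sq]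
  · nlinarith [M.ballHeight_nonneg hyj]

/-- Two images in chambers having a single wall in common, after reflecting both in this wall if
necessary. -/
theorem form_image_copy_le_of_length_lt (hij : M.Adj i j) {k : T} (hik : M.Adj i k) (hjk : j ≠ k)
    {g g' : PentagonGroup} {x y : T ⊕ S} (hxi : x ≠ .inl i) (hxj : x ≠ .inl j) (hyi : y ≠ .inl i)
    (hyk : y ≠ .inl k) (hg1 : g ≠ 1) (hgs : g ≠ s) (hg1' : g' ≠ 1) (hgs' : g' ≠ s)
    (hlength : length g' < length (s * g'))
    (hxy : x = y → φ ^ 2 ≤ rootCoeff g' (M.ballHeight i y) (M.ballHeight k y) * M.ballHeight i y +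
        rootCoeff (swap g') (M.ballHeight k y) (M.ballHeight i y) * M.ballHeight k y) :
    M.form (M.image (M.copy i j g x)) (M.image (M.copy i k g' y)) ≤ -1 := by
  have hκ : 0 < M.scale := by linarith [M.two_le_scale]
  have hφ := Real.one_lt_goldenRatio
  have hpx := M.ballHeight_nonneg hxi
  have hqx := M.ballHeight_nonneg hxj
  have hpy := M.ballHeight_nonneg hyi
  have hqy := M.ballHeight_nonneg hyk
  have hci := rootCoeff_nonneg hpx hqx g
  have hcj := le_rootCoeff_swap hpx hqx hg1 hgs
  have hci' := rootCoeff_nonneg hpy hqy g'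
  have hck' := rootCoeff_nonneg hqy hpy (swap g')
  have hHi : 0 ≤ height M.form (M.root i) (M.image (M.copy i k g' y)) := by
    rw [height_image_copy hik, sub_nonneg]
    exact rootCoeff_le_rootCoeff_s_mul hpy hqy hlength
  have hHj := rootCoeff_le_height_image_copy (M := M) hij.ne hjk hyi hyk hg1' hgs'
  have hleft : 0 ≤ rootCoeff g (M.ballHeight i x) (M.ballHeight j x) *
      height M.form (M.root i) (M.image (M.copy i k g' y)) := mul_nonneg hci hHi
  have hright := mul_le_mul hcj hHj hck' (hqx.trans hcj)
  rw [form_image_left, sum_copy_mul, show (M.copy i j g x).1 = x from rfl, form_ball_image_copy]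
  obtain rfl | hne := eq_or_ne x y
  · rw [M.form_ball_self]
    have := mul_nonneg hqx hck'
    nlinarith [hxy rfl, M.two_le_scale]
  · suffices 0 ≤ rootCoeff (swap g') (M.ballHeight k y) (M.ballHeight i y) *
        (M.ballHeight j x + M.ballHeight k x) by
      have := mul_nonneg hci' hpx
      nlinarith [M.form_ball_le hne]
    refine mul_nonneg hck' ?_
    obtain rfl | hxk := eq_or_ne x (.inl k)
    · have hjk' : φ ≤ M.ballHeight j (.inl k) := M.le_height_inl hjk.symm
      have hkk : M.ballHeight k (.inl k) = -1 := M.height_self k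
      linarith
    · exact add_nonneg hqx (M.ballHeight_nonneg hxk)

theorem form_image_copy_le_of_eq_one_or_eq_s {k : T} (hik : M.Adj i k) {g g' : PentagonGroup}
    {x y : T ⊕ S} (hg : g = 1 ∨ g = s) (hxi : x ≠ .inl i) (hxk : x ≠ .inl k) (hyi : y ≠ .inl i)
    (hyk : y ≠ .inl k) (hne : M.copy i j g x ≠ M.copy i k g' y) :
    M.form (M.image (M.copy i j g x)) (M.image (M.copy i k g' y)) ≤ -1 := by
  have hcopy : M.copy i j g x = M.copy i k g x := by
    rcases hg with rfl | rfl
    · rw [copy_one, copy_one]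
    · rw [copy_s, copy_s]
  rw [hcopy] at hne ⊢
  exact form_image_copy_le hik hxi hxk hyi hyk hne

omit [DecidableEq T] [Fintype T] in
theorem Kept.ne_of_eq_one_or_eq_s {k : T} (hik : M.Adj i k) {g : PentagonGroup} {x : T ⊕ S}
    (hx : M.Kept i j g x) (hg : g = 1 ∨ g = s) : x ≠ .inl k := fun h ↦
  hg.elim (hx.ne_one h) (hx.ne_s h hik)

theorem form_image_copy_le_of_ne (hij : M.Adj i j) {k : T} (hik : M.Adj i k) (hjk : j ≠ k)
    {g g' : PentagonGroup} {x y : T ⊕ S} (hx : M.Kept i j g x) (hy : M.Kept i k g' y)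
    (hne : M.copy i j g x ≠ M.copy i k g' y) :
    M.form (M.image (M.copy i j g x)) (M.image (M.copy i k g' y)) ≤ -1 := by
  have hxi := hx.ne_left
  have hxj := hx.ne_right
  have hyi := hy.ne_left
  have hyk := hy.ne_right
  by_cases hg : g = 1 ∨ g = s
  · exact form_image_copy_le_of_eq_one_or_eq_s hik hg hxi (hx.ne_of_eq_one_or_eq_s hik hg) hyi hyk
      hne
  by_cases hg' : g' = 1 ∨ g' = s
  · rw [← M.form_isSymm.eq]
    exact form_image_copy_le_of_eq_one_or_eq_s hij hg' hyi (hy.ne_of_eq_one_or_eq_s hij hg') hxi hxj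
      hne.symm
  by_cases hcopy : x = y ∧ ∃ u, (u = 1 ∨ u = s) ∧ M.copy i k u y = M.copy i k g' y
  · obtain ⟨rfl, u, hu, hcopy⟩ := hcopy
    rw [← hcopy] at hne ⊢
    rw [← M.form_isSymm.eq]
    exact form_image_copy_le_of_eq_one_or_eq_s hij hu hyi hxj hxi hxj hne.symm
  have hs_mul : ∀ g : PentagonGroup, ¬(g = 1 ∨ g = s) → s * g ≠ 1 ∧ s * g ≠ s := by decide
  have hs_mul_s_mul : ∀ g : PentagonGroup, s * (s * g) = g := by decide
  have hlength : ∀ g : PentagonGroup, length g < length (s * g) ∨ length (s * g) < length g := by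
    decide
  rcases hlength g' with h | h
  · rw [not_or] at hg hg'
    refine form_image_copy_le_of_length_lt hij hik hjk hxi hxj hyi hyk hg.1 hg.2 hg'.1 hg'.2 h
      fun hxy ↦ (copy_eq_or_le_pairing hyi hyk).resolve_left fun h ↦ hcopy ⟨hxy, 1, .inl rfl, ?_⟩
    simpa only [one_mul] using (h 1).symm
  · rw [← form_image_copy_s_mul hij hik]
    refine form_image_copy_le_of_length_lt hij hik hjk hxi hxj hyi hyk (hs_mul g hg).1
      (hs_mul g hg).2 (hs_mul g' hg').1 (hs_mul g' hg').2 (by rwa [hs_mul_s_mul])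
      fun hxy ↦ (copy_eq_or_le_pairing hyi hyk).resolve_left fun h ↦ hcopy ⟨hxy, s, .inr rfl, ?_⟩
    simpa only [hs_mul_s_mul] using (h s).symm

theorem Kept.form_image_copy_le {k l : T} (hij : M.Adj i j) (hkl : M.Adj k l)
    {g g' : PentagonGroup} {x y : T ⊕ S} (hx : M.Kept i j g x) (hy : M.Kept k l g' y)
    (hne : M.copy i j g x ≠ M.copy k l g' y) :
    M.form (M.image (M.copy i j g x)) (M.image (M.copy k l g' y)) ≤ -1 := by
  wlog hik : i = k ∨ (i ≠ k ∧ i ≠ l ∧ j ≠ k ∧ j ≠ l) generalizing i j k l g g'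
  · by_cases hil : i = l
    · rw [← copy_swap M k l] at hne ⊢
      exact this hij hkl.symm hx hy.symm hne (.inl hil)
    by_cases hjk : j = k
    · rw [← copy_swap M i j] at hne ⊢
      exact this hij.symm hkl hx.symm hy hne (.inl hjk)
    · have hjl : j = l := by tauto
      rw [← copy_swap M i j, ← copy_swap M k l] at hne ⊢
      exact this hij.symm hkl.symm hx.symm hy.symm hne (.inl hjl)
  obtain rfl | ⟨hik, hil, hjk, hjl⟩ := hik
  · obtain rfl | hjl := eq_or_ne j l
    · exact MirrorSystem.form_image_copy_le hij hx.ne_left hx.ne_right hy.ne_left hy.ne_right hne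
    · exact form_image_copy_le_of_ne hij hkl hjl hx hy hne
  · refine hx.placed_copy.form_image_le_neg_one hy.placed_copy (fun m ↦ ?_) hne
    by_cases hm : m = i ∨ m = j
    · exact .inr (copy_apply_of_ne (by grind) (by grind) g' y)
    · exact .inl (copy_apply_of_ne (by tauto) (by tauto) g x)

end MirrorSystem

/-! ### Counting balls and tangent pairs -/

section Counting

open PentagonGroup

variable {α : Type*} [Fintype α]

theorem card_filter_rel_eq {r : α → α → Prop} [DecidableRel r] {d : ℕ} {s : Finset α}
    (hd : ∀ x ∈ s, #{y | r x y} = d) : #{e ∈ s ×ˢ univ | r e.1 e.2} = #s * d := by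
  simp only [card_filter, sum_product]
  simp only [← card_filter, sum_congr rfl hd, sum_const, smul_eq_mul]

theorem mul_card_le_card_filter_notMem_add [DecidableEq α] {r : α → α → Prop} [DecidableRel r]
    (hr : ∀ x y, r x y → r y x) {d : ℕ} (hd : ∀ x, #{y | r x y} = d) (s : Finset α) :
    Fintype.card α * d ≤ #{e : α × α | r e.1 e.2 ∧ e.1 ∉ s ∧ e.2 ∉ s} + 2 * (#s * d) := by
  have hswap : #{e ∈ univ ×ˢ s | r e.1 e.2} = #{e ∈ s ×ˢ univ | r e.1 e.2} :=
    card_equiv (Equiv.prodComm _ _) fun e ↦ by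
      simpa using fun _ ↦ ⟨hr _ _, hr _ _⟩
  have hcard (u : Finset α) : #{e ∈ u ×ˢ univ | r e.1 e.2} = #u * d :=
    card_filter_rel_eq fun x _ ↦ hd x
  rw [two_mul, ← add_assoc, ← hcard]
  nth_rw 2 [← hswap]
  rw [← card_univ, ← hcard]
  refine (card_le_card fun e he ↦ ?_).trans ((card_union_le _ _).trans
    (Nat.add_le_add_right (card_union_le _ _) _))
  simp only [mem_filter, mem_product, mem_univ, mem_union, true_and, and_true] at he ⊢
  tauto

theorem card_filter_prod_isShortest {β : Type*} (X : Finset β) (A B : β → Prop) [DecidablePred A]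
    [DecidablePred B] :
    #{z ∈ univ ×ˢ X | (z.1 ≠ 1 ∧ z.1 ≠ s ∧ z.1 ≠ t) ∧ IsShortest (A z.2) (B z.2) z.1} +
      4 * #{x ∈ X | A x} + 4 * #{x ∈ X | B x} = 7 * #X + #{x ∈ X | A x ∧ B x} := by
  have h := sum_congr (rfl : X = X) fun x _ ↦ card_filter_isShortest (A x) (B x)
  simp only [sum_add_distrib, ← mul_sum, ← card_filter, sum_const, smul_eq_mul] at h
  rw [mul_comm 7, ← h, card_filter _ (univ ×ˢ X), sum_product_right]
  simp only [← card_filter]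

end Counting

section Faces

variable {T : Type*} [Fintype T] (G : SimpleGraph T)

open scoped Classical in
/-- The simplices of dimension at most `1` of a graph, including the empty one. -/
def graphFaces : Finset (Set T) :=
  insert ∅ (univ.image ({·}) ∪ G.edgeFinset.image (↑))

variable {G}

theorem mem_graphFaces {K : Set T} :
    K ∈ graphFaces G ↔ K = ∅ ∨ (∃ i, K = {i}) ∨ ∃ i j, G.Adj i j ∧ K = {i, j} := by
  classical
  simp only [graphFaces, mem_insert, mem_union, mem_image, mem_univ, true_and,
    SimpleGraph.mem_edgeFinset, Sym2.exists, SimpleGraph.mem_edgeSet, Sym2.coe_mk, eq_comm (a := K)]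

open scoped Classical in
theorem sum_graphFaces (f : Set T → ℕ) :
    ∑ K ∈ graphFaces G, f K = f ∅ + ∑ i, f {i} + ∑ e ∈ G.edgeFinset, f e := by
  have hmem : ∀ K ∈ G.edgeFinset.image ((↑) : Sym2 T → Set T), ∃ i j, i ≠ j ∧ K = {i, j} := by
    simp only [mem_image, Sym2.exists, SimpleGraph.mem_edgeFinset]
    rintro _ ⟨i, j, h, rfl⟩
    exact ⟨i, j, h.ne, Sym2.coe_mk⟩
  have hdisj : Disjoint (univ.image ({·})) (G.edgeFinset.image ((↑) : Sym2 T → Set T)) := by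
    rw [disjoint_left]
    intro K hK hK'
    obtain ⟨i, j, hij, rfl⟩ := hmem _ hK'
    obtain ⟨k, -, hk⟩ := mem_image.1 hK
    exact hij ((hk ▸ Set.subsingleton_singleton : Set.Subsingleton {i, j}) (.inl rfl) (.inr rfl))
  have hempty : ∅ ∉ univ.image ({·}) ∪ G.edgeFinset.image ((↑) : Sym2 T → Set T) := by
    rw [mem_union, not_or]
    refine ⟨by simp, fun h ↦ ?_⟩
    obtain ⟨i, j, -, h⟩ := hmem _ h
    exact (Set.insert_nonempty i {j}).ne_empty h.symm
  have hvertices : ∑ K ∈ univ.image ({·}), f K = ∑ i, f {i} :=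
    sum_image Set.singleton_injective.injOn
  have hedges : ∑ K ∈ G.edgeFinset.image ((↑) : Sym2 T → Set T), f K = ∑ e ∈ G.edgeFinset, f e :=
    sum_image SetLike.coe_injective.injOn
  rw [graphFaces, sum_insert hempty, sum_union hdisj, hvertices, hedges, add_assoc]

open scoped Classical in
theorem sum_graphFaces_le {f : Set T → ℕ} {a b c : ℕ} (hempty : f ∅ ≤ a) (hvertex : ∀ i, f {i} ≤ b)
    (hedge : ∀ {i j}, G.Adj i j → f {i, j} ≤ c) :
    ∑ K ∈ graphFaces G, f K ≤ a + Fintype.card T * b + #G.edgeFinset * c := by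
  rw [sum_graphFaces, ← card_univ]
  refine add_le_add_three hempty (sum_le_card_nsmul _ _ _ fun i _ ↦ hvertex i)
    (sum_le_card_nsmul _ _ _ fun e he ↦ ?_)
  induction e with
  | _ i j => exact Sym2.coe_mk (α := T) ▸ hedge (SimpleGraph.mem_edgeFinset.1 he)

open scoped Classical in
theorem le_sum_graphFaces {f : Set T → ℕ} {a b c : ℕ} (hempty : a ≤ f ∅) (hvertex : ∀ i, b ≤ f {i})
    (hedge : ∀ {i j}, G.Adj i j → c ≤ f {i, j}) :
    a + Fintype.card T * b + #G.edgeFinset * c ≤ ∑ K ∈ graphFaces G, f K := by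
  rw [sum_graphFaces, ← card_univ]
  refine add_le_add_three hempty (card_nsmul_le_sum _ _ _ fun i _ ↦ hvertex i)
    (card_nsmul_le_sum _ _ _ fun e he ↦ ?_)
  induction e with
  | _ i j => exact Sym2.coe_mk (α := T) ▸ hedge (SimpleGraph.mem_edgeFinset.1 he)

open scoped Classical in
theorem two_mul_card_edgeFinset {d : ℕ} (hd : ∀ i, #{j | G.Adj i j} = d) :
    2 * #G.edgeFinset = Fintype.card T * d := by
  rw [← G.sum_degrees_eq_twice_card_edges, ← card_univ, ← smul_eq_mul, ← sum_const]
  refine sum_congr rfl fun i _ ↦ ?_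
  rw [← hd i, ← G.card_neighborFinset_eq_degree, SimpleGraph.neighborFinset_eq_filter]

end Faces

namespace MirrorSystem

open PentagonGroup

variable {V T S : Type*} [AddCommGroup V] [Module ℝ V] (M : MirrorSystem V T S)

theorem ballHeight_inl_ne_zero (i k : T) : M.ballHeight i (.inl k) ≠ 0 := by
  obtain rfl | hk := eq_or_ne k i
  · exact (M.height_self k).trans_ne (by norm_num)
  · exact (Real.goldenRatio_pos.trans_le (M.le_height_inl hk)).ne'

theorem ballHeight_add_eq_zero_iff {i : T} {x y : T ⊕ S} (hx : x ≠ .inl i) (hy : y ≠ .inl i) :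
    M.ballHeight i x + M.ballHeight i y = 0 ↔ M.ballHeight i x = 0 ∧ M.ballHeight i y = 0 :=
  add_eq_zero_iff_of_nonneg (M.ballHeight_nonneg hx) (M.ballHeight_nonneg hy)

/-- The graph of mirrors in which adjacent mirrors enclose the angle `π / 5`. -/
def mirrorGraph : SimpleGraph T where
  Adj := M.Adj
  symm := ⟨fun _ _ h ↦ h.symm⟩
  loopless := ⟨M.not_adj_self⟩

/-- The tangency relation of the initial packing. -/
def Tangent (x y : T ⊕ S) : Prop := M.form (M.ball x) (M.ball y) = -1

variable {M}

theorem Tangent.symm {x y : T ⊕ S} (h : M.Tangent x y) : M.Tangent y x := by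
  rwa [Tangent, M.form_isSymm.eq]

variable [DecidableEq T]

omit [DecidableEq T] in
theorem Kept.of_ne {i j : T} {g : PentagonGroup} (hg : g ≠ 1 ∧ g ≠ s ∧ g ≠ t) {x : T ⊕ S}
    (hxi : x ≠ .inl i) (hxj : x ≠ .inl j) : M.Kept i j g x :=
  ⟨hxi, hxj, fun _ ↦ hg.1, fun _ _ ↦ hg.2.1, fun _ _ ↦ hg.2.2⟩

theorem Kept.exists_isShortest {i j : T} {g : PentagonGroup} {x : T ⊕ S} (h : M.Kept i j g x) :
    ∃ g', M.Kept i j g' x ∧ IsShortest (M.ballHeight i x = 0) (M.ballHeight j x = 0) g' ∧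
      M.copy i j g' x = M.copy i j g x := by
  induction hn : length g using Nat.strong_induction_on generalizing g with
  | _ n ih =>
    have of_zero (g : PentagonGroup) {k : T} (hk : M.ballHeight k x = 0) : M.Kept i j g x :=
      have hx {l} : x ≠ .inl l := fun hx ↦ M.ballHeight_inl_ne_zero k l (hx ▸ hk)
      ⟨hx, hx, fun h ↦ absurd h hx, fun h ↦ absurd h hx, fun h ↦ absurd h hx⟩
    by_cases hs : M.ballHeight i x = 0 ∧ length (g * s) < length g
    · rw [← M.copy_mul_s i j g hs.1]
      exact ih _ (hn ▸ hs.2) (of_zero _ hs.1) rfl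
    by_cases ht : M.ballHeight j x = 0 ∧ length (g * t) < length g
    · rw [← M.copy_mul_t i j g ht.1]
      exact ih _ (hn ▸ ht.2) (of_zero _ ht.1) rfl
    · exact ⟨g, h, ⟨not_and.1 hs, not_and.1 ht⟩, rfl⟩

variable [Fintype T]

variable (M) in
open scoped Classical in
/-- The balls through which the mirror of `i` passes without being orthogonal to them, together with
those of the mirrors adjacent to `i`. -/
def cutOff (i : T) : Finset (T ⊕ S) := (insert i ({k | M.Adj i k} : Finset T)).map .inl

theorem mem_cutOff {i : T} {x : T ⊕ S} :
    x ∈ M.cutOff i ↔ ∃ k, (k = i ∨ M.Adj i k) ∧ .inl k = x := by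
  simp [cutOff]

theorem kept_s {i j : T} (hij : M.Adj i j) {x : T ⊕ S} (hx : x ∉ M.cutOff i) : M.Kept i j s x where
  ne_left h := hx (mem_cutOff.2 ⟨i, .inl rfl, h.symm⟩)
  ne_right h := hx (mem_cutOff.2 ⟨j, .inr hij, h.symm⟩)
  ne_one _ := by decide
  ne_s h hk := (hx (mem_cutOff.2 ⟨_, .inr hk, h.symm⟩)).elim
  ne_t _ _ := by decide

theorem Kept.notMem_cutOff {i j : T} {x : T ⊕ S} (h : M.Kept i j s x) : x ∉ M.cutOff i := by
  intro hx
  obtain ⟨k, rfl | hk, rfl⟩ := mem_cutOff.1 hx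
  exacts [h.ne_left rfl, h.ne_s rfl hk rfl]

theorem form_image_copy_self {i j : T} (hij : M.Adj i j) (g : PentagonGroup) (x y : T ⊕ S) :
    M.form (M.image (M.copy i j g x)) (M.image (M.copy i j g y)) =
      M.form (M.ball x) (M.ball y) := by
  rw [form_image_copy hij, inv_mul_cancel, image_copy_one]

section Packing

variable [Fintype S]

variable (M) in
open scoped Classical in
/-- The final packing: all kept images of balls under the groups generated by two adjacent
mirrors. -/
def packing : Finset ((T ⊕ S) × (T → ℝ)) :=
  ({z | M.Adj z.1 z.2.1 ∧ M.Kept z.1 z.2.1 z.2.2.1 z.2.2.2} :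
    Finset (T × T × PentagonGroup × (T ⊕ S))).image fun z ↦ M.copy z.1 z.2.1 z.2.2.1 z.2.2.2

theorem mem_packing {z : (T ⊕ S) × (T → ℝ)} :
    z ∈ M.packing ↔ ∃ i j g x, M.Adj i j ∧ M.Kept i j g x ∧ M.copy i j g x = z := by
  simp only [packing, mem_image, mem_filter, mem_univ, true_and, Prod.exists, and_assoc]

theorem mem_packing_cases {z : (T ⊕ S) × (T → ℝ)} (hz : z ∈ M.packing) :
    (Function.support z.2 = ∅ ∧ ∃ y : S, z = (.inr y, 0)) ∨
    (∃ i, Function.support z.2 = {i} ∧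
      ∃ x, (x ∉ M.cutOff i ∧ M.ballHeight i x ≠ 0) ∧ z = (x, Pi.single i (M.ballHeight i x))) ∨
    ∃ i j, M.Adj i j ∧ Function.support z.2 = {i, j} ∧ ∃ g x, ((g ≠ 1 ∧ g ≠ s ∧ g ≠ t) ∧
      IsShortest (M.ballHeight i x = 0) (M.ballHeight j x = 0) g) ∧ (x ≠ .inl i ∧ x ≠ .inl j) ∧
        z = M.copy i j g x := by
  obtain ⟨i, j, g, x, hij, hx, rfl⟩ := mem_packing.1 hz
  obtain ⟨g, hx, hg, hcopy⟩ := hx.exists_isShortest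
  rw [← hcopy]
  by_cases h1 : g = 1
  · subst h1
    rw [copy_one]
    rcases x with k | y
    exacts [(hx.ne_one rfl rfl).elim, .inl ⟨Function.support_zero, y, rfl⟩]
  by_cases hs : g = s
  · subst hs
    rw [copy_s]
    have hi : M.ballHeight i x ≠ 0 := fun h ↦ hg.1 h (by decide)
    exact .inr (.inl ⟨i, Pi.support_single_of_ne hi, x, ⟨hx.notMem_cutOff, hi⟩, rfl⟩)
  by_cases ht : g = t
  · subst ht
    rw [copy_t]
    have hj : M.ballHeight j x ≠ 0 := fun h ↦ hg.2 h (by decide)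
    exact .inr (.inl ⟨j, Pi.support_single_of_ne hj, x, ⟨(swap_t ▸ hx.symm).notMem_cutOff, hj⟩,
      rfl⟩)
  · exact .inr (.inr ⟨i, j, hij, support_rootCoeffs (M.ballHeight_nonneg hx.ne_left)
      (M.ballHeight_nonneg hx.ne_right) hij.ne hg h1 hs ht, g, x, ⟨⟨h1, hs, ht⟩, hg⟩,
      ⟨hx.ne_left, hx.ne_right⟩, rfl⟩)

theorem support_mem_graphFaces {z : (T ⊕ S) × (T → ℝ)} (hz : z ∈ M.packing) :
    Function.support z.2 ∈ graphFaces M.mirrorGraph :=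
  mem_graphFaces.2 <| (mem_packing_cases hz).imp And.left <| .imp (Exists.imp fun _ ↦ And.left)
    fun ⟨i, j, hij, h, _⟩ ↦ ⟨i, j, hij, h⟩

open scoped Classical in
theorem card_packing_empty_le : #{z ∈ M.packing | Function.support z.2 = ∅} ≤ Fintype.card S := by
  rw [← card_univ]
  refine (card_le_card fun z hz ↦ ?_).trans
    (card_image_le (f := fun y ↦ ((.inr y, 0) : (T ⊕ S) × (T → ℝ))))
  obtain ⟨hz, hsupp⟩ := mem_filter.1 hz
  rcases mem_packing_cases hz with ⟨-, y, rfl⟩ | ⟨i, h, -⟩ | ⟨i, j, -, h, -⟩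
  · exact mem_image_of_mem _ (mem_univ y)
  · exact absurd (h.symm.trans hsupp) (Set.singleton_ne_empty i)
  · exact absurd (h.symm.trans hsupp) (Set.insert_nonempty i {j}).ne_empty

open scoped Classical in
theorem card_packing_singleton_le (i : T) :
    #{z ∈ M.packing | Function.support z.2 = {i}} ≤
      #{x | x ∉ M.cutOff i ∧ M.ballHeight i x ≠ 0} := by
  refine (card_le_card fun z hz ↦ ?_).trans
    (card_image_le (f := fun x ↦ (x, Pi.single i (M.ballHeight i x))))
  obtain ⟨hz, hsupp⟩ := mem_filter.1 hz
  rcases mem_packing_cases hz with ⟨h, -⟩ | ⟨k, h, x, hx, rfl⟩ | ⟨k, l, hkl, h, -⟩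
  · exact absurd (hsupp.symm.trans h) (Set.singleton_ne_empty i)
  · obtain rfl := Set.singleton_injective (h.symm.trans hsupp)
    exact mem_image_of_mem _ (mem_filter.2 ⟨mem_univ x, hx⟩)
  · exact absurd ((h.symm.trans hsupp) ▸ Set.subsingleton_singleton : Set.Subsingleton {k, l})
      fun h ↦ hkl.ne (h (.inl rfl) (.inr rfl))

open scoped Classical in
theorem card_packing_pair_le {i j : T} (hij : M.Adj i j) :
    #{z ∈ M.packing | Function.support z.2 = {i, j}} ≤
      #{z ∈ univ ×ˢ ({x | x ≠ .inl i ∧ x ≠ .inl j} : Finset (T ⊕ S)) |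
        (z.1 ≠ 1 ∧ z.1 ≠ s ∧ z.1 ≠ t) ∧
          IsShortest (M.ballHeight i z.2 = 0) (M.ballHeight j z.2 = 0) z.1} := by
  refine (card_le_card fun z hz ↦ ?_).trans (card_image_le (f := fun z ↦ M.copy i j z.1 z.2))
  obtain ⟨hz, hsupp⟩ := mem_filter.1 hz
  have hswap : ∀ g : PentagonGroup, g ≠ 1 ∧ g ≠ s ∧ g ≠ t →
    swap g ≠ 1 ∧ swap g ≠ s ∧ swap g ≠ t := by decide
  rcases mem_packing_cases hz with ⟨h, -⟩ | ⟨k, h, -⟩ | ⟨k, l, -, h, g, x, hg, hx, rfl⟩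
  · exact absurd (hsupp.symm.trans h) (Set.insert_nonempty i {j}).ne_empty
  · exact absurd ((hsupp.symm.trans h) ▸ Set.subsingleton_singleton : Set.Subsingleton {i, j})
      fun h ↦ hij.ne (h (.inl rfl) (.inr rfl))
  · rcases Set.pair_eq_pair_iff.1 (hsupp.symm.trans h) with ⟨rfl, rfl⟩ | ⟨rfl, rfl⟩
    · exact mem_image.2 ⟨(g, x), by simpa using ⟨hx, hg⟩, rfl⟩
    · refine mem_image.2 ⟨(swap g, x), ?_, M.copy_swap _ _ g x⟩
      simpa only [mem_filter, mem_product, mem_univ, true_and] using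
        ⟨hx.symm, hswap g hg.1, hg.2.symm⟩

variable (M) in
open scoped Classical in
/-- The pairs of tangent balls in the final packing. -/
def tangentPairs : Finset (((T ⊕ S) × (T → ℝ)) × ((T ⊕ S) × (T → ℝ))) :=
  {e ∈ M.packing ×ˢ M.packing | M.form (M.image e.1) (M.image e.2) = -1}

variable (M) in
open scoped Classical in
/-- The pairs of tangent balls in the initial packing that avoid the set `R`. -/
def tangentPairsAvoiding (R : Finset (T ⊕ S)) : Finset ((T ⊕ S) × (T ⊕ S)) :=
  {e | M.Tangent e.1 e.2 ∧ e.1 ∉ R ∧ e.2 ∉ R}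

theorem copy_mem_tangentPairs {i j : T} (hij : M.Adj i j) {g : PentagonGroup} {x y : T ⊕ S}
    (hx : M.Kept i j g x) (hy : M.Kept i j g y) (hxy : M.Tangent x y) :
    (M.copy i j g x, M.copy i j g y) ∈ M.tangentPairs :=
  mem_filter.2 ⟨mem_product.2 ⟨mem_packing.2 ⟨i, j, g, x, hij, hx, rfl⟩,
    mem_packing.2 ⟨i, j, g, y, hij, hy, rfl⟩⟩, (form_image_copy_self hij g x y).trans hxy⟩

open scoped Classical in
theorem le_card_tangentPairs_empty {i j : T} (hij : M.Adj i j) :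
    #(M.tangentPairsAvoiding (univ.map .inl)) ≤
      #{e ∈ M.tangentPairs | Function.support (e.1.2 + e.2.2) = ∅} := by
  refine card_le_card_of_injOn (fun e ↦ ((e.1, 0), (e.2, 0))) (fun e he ↦ ?_) (fun e _ e' _ h ↦ ?_)
  · obtain ⟨-, htangent, hx, hy⟩ := mem_filter.1 he
    have kept_one {x : T ⊕ S} (hx : x ∉ univ.map (.inl : T ↪ T ⊕ S)) : M.Kept i j 1 x := by
      rcases x with k | y
      · simp at hx
      · exact ⟨nofun, nofun, nofun, nofun, nofun⟩
    have := copy_mem_tangentPairs hij (kept_one hx) (kept_one hy) htangent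
    rw [copy_one, copy_one] at this
    exact mem_filter.2 ⟨this, by simp⟩
  · simpa [Prod.ext_iff] using h

open scoped Classical in
theorem le_card_tangentPairs_singleton {i j : T} (hij : M.Adj i j) :
    #{e ∈ M.tangentPairsAvoiding (M.cutOff i) |
      M.ballHeight i e.1 + M.ballHeight i e.2 ≠ 0} ≤
      #{e ∈ M.tangentPairs | Function.support (e.1.2 + e.2.2) = {i}} := by
  refine card_le_card_of_injOn (fun e ↦ ((e.1, Pi.single i (M.ballHeight i e.1)),
    (e.2, Pi.single i (M.ballHeight i e.2)))) (fun e he ↦ ?_) (fun e _ e' _ h ↦ ?_)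
  · obtain ⟨he, hheight⟩ := mem_filter.1 he
    obtain ⟨-, htangent, hx, hy⟩ := mem_filter.1 he
    have hx := kept_s hij hx
    have hy := kept_s hij hy
    have := copy_mem_tangentPairs hij hx hy htangent
    rw [copy_s, copy_s] at this
    refine mem_filter.2 ⟨this, ?_⟩
    rw [← Pi.single_add]
    exact Pi.support_single_of_ne hheight
  · simp only [Prod.ext_iff] at h
    exact Prod.ext h.1.1 h.2.1

open scoped Classical in
theorem le_card_tangentPairs_pair {i j : T} (hij : M.Adj i j) :
    #{z ∈ univ ×ˢ M.tangentPairsAvoiding {.inl i, .inl j} | (z.1 ≠ 1 ∧ z.1 ≠ s ∧ z.1 ≠ t) ∧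
      IsShortest (M.ballHeight i z.2.1 + M.ballHeight i z.2.2 = 0)
        (M.ballHeight j z.2.1 + M.ballHeight j z.2.2 = 0) z.1} ≤
      #{e ∈ M.tangentPairs | Function.support (e.1.2 + e.2.2) = {i, j}} := by
  have hne {x : T ⊕ S} (hx : x ∉ ({.inl i, .inl j} : Finset (T ⊕ S))) :
      x ≠ .inl i ∧ x ≠ .inl j := by simpa using hx
  refine card_le_card_of_injOn (fun z ↦ (M.copy i j z.1 z.2.1, M.copy i j z.1 z.2.2))
    (fun ⟨g, x, y⟩ hz ↦ ?_) (fun ⟨g, x, y⟩ hz ⟨g', x', y'⟩ hz' h ↦ ?_) <;>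
  obtain ⟨hz, hg, hshort⟩ := mem_filter.1 hz <;>
  obtain ⟨-, htangent, hx, hy⟩ := mem_filter.1 (mem_product.1 hz).2
  · refine mem_filter.2 ⟨copy_mem_tangentPairs hij (.of_ne hg (hne hx).1 (hne hx).2)
      (.of_ne hg (hne hy).1 (hne hy).2) htangent, ?_⟩
    simp only [copy, rootCoeffs_add]
    exact support_rootCoeffs
      (add_nonneg (M.ballHeight_nonneg (hne hx).1) (M.ballHeight_nonneg (hne hy).1))
      (add_nonneg (M.ballHeight_nonneg (hne hx).2) (M.ballHeight_nonneg (hne hy).2))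
      hij.ne hshort hg.1 hg.2.1 hg.2.2
  · obtain ⟨-, -, hshort'⟩ := mem_filter.1 hz'
    simp only [copy, Prod.mk.injEq] at h
    obtain ⟨⟨rfl, hx'⟩, rfl, hy'⟩ := h
    have hsum := congrArg₂ (· + ·) hx' hy'
    simp only [rootCoeffs_add] at hsum
    exact Prod.ext (rootCoeffs_injOn
      (add_nonneg (M.ballHeight_nonneg (hne hx).1) (M.ballHeight_nonneg (hne hy).1))
      (add_nonneg (M.ballHeight_nonneg (hne hx).2) (M.ballHeight_nonneg (hne hy).2))
      hij.ne hshort hshort' hsum) rfl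

end Packing

end MirrorSystem

namespace MirrorSystem

variable {V T S : Type*} [AddCommGroup V] [Module ℝ V] {M : MirrorSystem V T S}
variable [Fintype T] [Fintype S]

section

variable [DecidableEq T]

theorem form_image_self {z : (T ⊕ S) × (T → ℝ)} (hz : z ∈ M.packing) :
    M.form (M.image z) (M.image z) = 1 := by
  obtain ⟨i, j, g, x, hij, -, rfl⟩ := mem_packing.1 hz
  rw [form_image_copy_self hij, M.form_ball_self]

theorem form_image_le_of_mem_packing {z w : (T ⊕ S) × (T → ℝ)} (hz : z ∈ M.packing)
    (hw : w ∈ M.packing) (hne : z ≠ w) : M.form (M.image z) (M.image w) ≤ -1 := by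
  obtain ⟨i, j, g, x, hij, hx, rfl⟩ := mem_packing.1 hz
  obtain ⟨k, l, g', y, hkl, hy, rfl⟩ := mem_packing.1 hw
  exact hx.form_image_copy_le hij hkl hy hne

theorem image_pos {z : (T ⊕ S) × (T → ℝ)} (hz : z ∈ M.packing) {a : V →ₗ[ℝ] ℝ}
    (hball : ∀ x, 0 < a (M.ball x)) (hroot : ∀ i, 0 ≤ a (M.root i)) : 0 < a (M.image z) := by
  obtain ⟨i, j, g, x, -, hx, rfl⟩ := mem_packing.1 hz
  simp only [image, map_add, map_smul, map_sum, smul_eq_mul]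
  exact add_pos_of_pos_of_nonneg (hball x) (mul_nonneg (by linarith [M.two_le_scale])
    (sum_nonneg fun k _ ↦ mul_nonneg (copy_nonneg hx.ne_left hx.ne_right g k) (hroot k)))

end

variable (M) in
open scoped Classical in
/-- The incidence numbers of the 120 vertices of the 600-cell, of which the 24 in `T` span an
inscribed 24-cell. -/
structure IsSixHundredCell : Prop where
  card_left : Fintype.card T = 24
  card_right : Fintype.card S = 96
  card_adj (i : T) : #{j | M.Adj i j} = 8
  card_tangent (x : T ⊕ S) : #{y | M.Tangent x y} = 12
  card_height_eq_zero (i : T) : #{x | M.ballHeight i x = 0} = 12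
  card_tangent_height_eq_zero (i : T) :
    #{e : (T ⊕ S) × (T ⊕ S) | M.Tangent e.1 e.2 ∧ M.ballHeight i e.1 = 0 ∧
      M.ballHeight i e.2 = 0} = 60
  card_height_eq_zero_of_adj {i j : T} : M.Adj i j →
    #{x | M.ballHeight i x = 0 ∧ M.ballHeight j x = 0} = 3
  card_tangent_height_eq_zero_of_adj {i j : T} : M.Adj i j →
    #{e : (T ⊕ S) × (T ⊕ S) | M.Tangent e.1 e.2 ∧
      (M.ballHeight i e.1 = 0 ∧ M.ballHeight i e.2 = 0) ∧
      M.ballHeight j e.1 = 0 ∧ M.ballHeight j e.2 = 0} = 6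

namespace IsSixHundredCell

theorem card_sum (hM : M.IsSixHundredCell) : Fintype.card (T ⊕ S) = 120 := by
  rw [Fintype.card_sum, hM.card_left, hM.card_right]

open scoped Classical in
theorem card_edgeFinset (hM : M.IsSixHundredCell) : #M.mirrorGraph.edgeFinset = 96 := by
  have h := two_mul_card_edgeFinset (G := M.mirrorGraph) hM.card_adj
  rw [hM.card_left] at h
  omega

variable [DecidableEq T]

theorem card_cutOff (hM : M.IsSixHundredCell) (i : T) : #(M.cutOff i) = 9 := by
  classical
  rw [cutOff, card_map, card_insert_of_notMem (by simpa using M.not_adj_self i),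
    Nat.add_right_cancel_iff]
  convert hM.card_adj i

open scoped Classical in
theorem card_packing_singleton_le (hM : M.IsSixHundredCell) (i : T) :
    #{z ∈ M.packing | Function.support z.2 = {i}} ≤ 99 := by
  have hdisj : Disjoint (M.cutOff i) ({x | M.ballHeight i x = 0} : Finset (T ⊕ S)) := by
    rw [disjoint_left]
    intro x hx
    obtain ⟨k, -, rfl⟩ := mem_cutOff.1 hx
    simpa using M.ballHeight_inl_ne_zero i k
  have hcard := card_compl (M.cutOff i ∪ ({x | M.ballHeight i x = 0} : Finset (T ⊕ S)))
  rw [card_union_of_disjoint hdisj, hM.card_cutOff, hM.card_height_eq_zero, hM.card_sum] at hcard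
  refine (MirrorSystem.card_packing_singleton_le i).trans (hcard.le.trans' (card_le_card ?_))
  intro x hx
  simpa using hx

open scoped Classical in
theorem card_packing_pair_le (hM : M.IsSixHundredCell) {i j : T} (hij : M.Adj i j) :
    #{z ∈ M.packing | Function.support z.2 = {i, j}} ≤ 733 := by
  have hX : #({x | x ≠ .inl i ∧ x ≠ .inl j} : Finset (T ⊕ S)) = 118 := by
    have hpair : ({x | x ≠ .inl i ∧ x ≠ .inl j} : Finset (T ⊕ S)) = {.inl i, .inl j}ᶜ := by
      ext x
      simp
    rw [hpair, card_compl, card_pair (Sum.inl_injective.ne hij.ne), hM.card_sum]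
  have hfilter {A : T ⊕ S → Prop} [DecidablePred A] (hA : ∀ k, ¬ A (.inl k)) :
      filter A {x | x ≠ .inl i ∧ x ≠ .inl j} = ({x | A x} : Finset (T ⊕ S)) := by
    ext x
    simp only [mem_filter, mem_univ, true_and, and_iff_right_iff_imp]
    exact fun hx ↦ ⟨fun h ↦ hA i (h ▸ hx), fun h ↦ hA j (h ▸ hx)⟩
  have hcard := card_filter_prod_isShortest ({x | x ≠ .inl i ∧ x ≠ .inl j} : Finset (T ⊕ S))
    (M.ballHeight i · = 0) (M.ballHeight j · = 0)
  rw [hX, hfilter (M.ballHeight_inl_ne_zero i), hfilter (M.ballHeight_inl_ne_zero j),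
    hfilter fun k hk ↦ M.ballHeight_inl_ne_zero i k hk.1, hM.card_height_eq_zero,
    hM.card_height_eq_zero, hM.card_height_eq_zero_of_adj hij] at hcard
  exact (MirrorSystem.card_packing_pair_le hij).trans (by omega)

theorem card_packing_le (hM : M.IsSixHundredCell) : #M.packing ≤ 72840 := by
  classical
  rw [card_eq_sum_card_fiberwise (f := fun z ↦ Function.support z.2)
    (t := graphFaces M.mirrorGraph) fun z hz ↦ support_mem_graphFaces hz]
  refine (sum_graphFaces_le card_packing_empty_le hM.card_packing_singleton_le
    hM.card_packing_pair_le).trans ?_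
  rw [hM.card_left, hM.card_right, hM.card_edgeFinset]

theorem le_card_tangentPairsAvoiding (hM : M.IsSixHundredCell) (R : Finset (T ⊕ S)) :
    1440 ≤ #(M.tangentPairsAvoiding R) + 24 * #R := by
  classical
  have h := mul_card_le_card_filter_notMem_add (fun _ _ ↦ Tangent.symm) hM.card_tangent R
  rw [hM.card_sum] at h
  rw [tangentPairsAvoiding]
  omega

open scoped Classical in
theorem le_card_tangentPairs_empty (hM : M.IsSixHundredCell) {i j : T} (hij : M.Adj i j) :
    864 ≤ #{e ∈ M.tangentPairs | Function.support (e.1.2 + e.2.2) = ∅} := by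
  have h := hM.le_card_tangentPairsAvoiding (univ.map .inl)
  rw [card_map, card_univ, hM.card_left] at h
  exact (MirrorSystem.le_card_tangentPairs_empty hij).trans' (by omega)

omit [DecidableEq T] in
theorem exists_adj (hM : M.IsSixHundredCell) (i : T) : ∃ j, M.Adj i j := by
  classical
  have h : 0 < #({j | M.Adj i j} : Finset T) := by rw [hM.card_adj]; norm_num
  exact (card_pos.1 h).imp fun j hj ↦ (mem_filter.1 hj).2

open scoped Classical in
theorem card_filter_ballHeight_add_eq_zero_le (hM : M.IsSixHundredCell) {i : T}
    {R : Finset (T ⊕ S)} (hR : .inl i ∈ R) :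
    #{e ∈ M.tangentPairsAvoiding R | M.ballHeight i e.1 + M.ballHeight i e.2 = 0} ≤ 60 := by
  rw [← hM.card_tangent_height_eq_zero i]
  refine card_le_card fun e he ↦ ?_
  obtain ⟨he, hheight⟩ := mem_filter.1 he
  obtain ⟨-, htangent, hx, hy⟩ := mem_filter.1 he
  rw [M.ballHeight_add_eq_zero_iff (ne_of_mem_of_not_mem hR hx).symm
    (ne_of_mem_of_not_mem hR hy).symm] at hheight
  exact mem_filter.2 ⟨mem_univ e, htangent, hheight⟩

open scoped Classical in
theorem le_card_filter_ballHeight_add_eq_zero (hM : M.IsSixHundredCell) {i j : T}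
    (hij : M.Adj i j) :
    6 ≤ #{e ∈ M.tangentPairsAvoiding {.inl i, .inl j} |
      M.ballHeight i e.1 + M.ballHeight i e.2 = 0 ∧
        M.ballHeight j e.1 + M.ballHeight j e.2 = 0} := by
  rw [← hM.card_tangent_height_eq_zero_of_adj hij]
  refine card_le_card fun e he ↦ ?_
  obtain ⟨-, htangent, ⟨hix, hiy⟩, hjx, hjy⟩ := mem_filter.1 he
  have havoid {x : T ⊕ S} (hx : M.ballHeight i x = 0) :
      x ∉ ({.inl i, .inl j} : Finset (T ⊕ S)) := by
    rw [mem_insert, mem_singleton]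
    rintro (rfl | rfl) <;> exact M.ballHeight_inl_ne_zero _ _ hx
  exact mem_filter.2 ⟨mem_filter.2 ⟨mem_univ e, htangent, havoid hix, havoid hiy⟩,
    by rw [hix, hiy, add_zero], by rw [hjx, hjy, add_zero]⟩

open scoped Classical in
theorem le_card_tangentPairs_singleton (hM : M.IsSixHundredCell) (i : T) :
    1164 ≤ #{e ∈ M.tangentPairs | Function.support (e.1.2 + e.2.2) = {i}} := by
  obtain ⟨j, hij⟩ := hM.exists_adj i
  have htotal := hM.le_card_tangentPairsAvoiding (M.cutOff i)
  have hzero := hM.card_filter_ballHeight_add_eq_zero_le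
    (mem_cutOff.2 ⟨i, .inl rfl, rfl⟩ : .inl i ∈ M.cutOff i)
  have hsplit := card_filter_add_card_filter_not (s := M.tangentPairsAvoiding (M.cutOff i))
    (fun e ↦ M.ballHeight i e.1 + M.ballHeight i e.2 = 0)
  rw [hM.card_cutOff] at htotal
  refine (MirrorSystem.le_card_tangentPairs_singleton hij).trans' ?_
  simp only [ne_eq]
  omega

open scoped Classical in
theorem le_card_tangentPairs_pair (hM : M.IsSixHundredCell) {i j : T} (hij : M.Adj i j) :
    9270 ≤ #{e ∈ M.tangentPairs | Function.support (e.1.2 + e.2.2) = {i, j}} := by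
  have htotal := hM.le_card_tangentPairsAvoiding {.inl i, .inl j}
  rw [card_pair (Sum.inl_injective.ne hij.ne)] at htotal
  have hi := hM.card_filter_ballHeight_add_eq_zero_le (i := i) (R := {.inl i, .inl j}) (by simp)
  have hj := hM.card_filter_ballHeight_add_eq_zero_le (i := j) (R := {.inl i, .inl j}) (by simp)
  have hboth := hM.le_card_filter_ballHeight_add_eq_zero hij
  have hcard := card_filter_prod_isShortest (M.tangentPairsAvoiding {.inl i, .inl j})
    (fun e ↦ M.ballHeight i e.1 + M.ballHeight i e.2 = 0)
    fun e ↦ M.ballHeight j e.1 + M.ballHeight j e.2 = 0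
  exact (MirrorSystem.le_card_tangentPairs_pair hij).trans' (by omega)

theorem le_card_tangentPairs (hM : M.IsSixHundredCell) : 918720 ≤ #M.tangentPairs := by
  classical
  have hT : Nonempty T := Fintype.card_pos_iff.1 (by rw [hM.card_left]; norm_num)
  obtain ⟨j, hij⟩ := hM.exists_adj hT.some
  have hsum := le_sum_graphFaces (G := M.mirrorGraph)
    (f := fun K : Set T ↦ #{e ∈ M.tangentPairs | Function.support (e.1.2 + e.2.2) = K})
    (hM.le_card_tangentPairs_empty hij) hM.le_card_tangentPairs_singleton
    fun hij ↦ hM.le_card_tangentPairs_pair hij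
  rw [hM.card_left, hM.card_edgeFinset, sum_card_fiberwise_eq_card_filter] at hsum
  exact hsum.trans (card_filter_le ..)

theorem card_packing_pos (hM : M.IsSixHundredCell) : 0 < #M.packing := by
  have h := hM.le_card_tangentPairs.trans (card_filter_le _ _)
  rw [card_product] at h
  exact Nat.pos_of_mul_pos_left ((by norm_num : 0 < 918720).trans_le h)

theorem le_card_tangentPairs_div_card_packing (hM : M.IsSixHundredCell) :
    (7656 / 607 : ℝ) ≤ #M.tangentPairs / #M.packing := by
  have hballs : (#M.packing : ℝ) ≤ 72840 := mod_cast hM.card_packing_le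
  have hpairs : 918720 ≤ (#M.tangentPairs : ℝ) := mod_cast hM.le_card_tangentPairs
  have hpos : 0 < (#M.packing : ℝ) := mod_cast hM.card_packing_pos
  rw [le_div_iff₀ hpos]
  linarith

end IsSixHundredCell

end MirrorSystem

/-! ### The 600-cell -/

namespace SixHundredCell

/-- The vertices of a 24-cell inscribed in the 600-cell: those with one nonzero coordinate and those
with all coordinates of the same absolute value. -/
def CoreVertex : Type := (Fin 4 × Bool) ⊕ (Bool × Bool × Bool × Bool)
  deriving DecidableEq, Fintype

/-- The other vertices of the 600-cell, which form a snub 24-cell. They are labelled by an even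
permutation of the coordinates and the signs of the nonzero ones. -/
def SnubVertex : Type := Fin 12 × Bool × Bool × Bool
  deriving DecidableEq, Fintype

/-- The vertices of the 600-cell. -/
abbrev Vertex : Type := CoreVertex ⊕ SnubVertex

/-- The sign change encoded by a Boolean. -/
def signed (b : Bool) (z : GoldenInt) : GoldenInt := bif b then -z else z

/-- The even permutations of `(a, b, c, 0)`. -/
def evenPerm (a b c : GoldenInt) : Fin 12 → Fin 4 → GoldenInt :=
  ![![a, b, c, 0], ![b, c, a, 0], ![c, a, b, 0], ![b, a, 0, c], ![a, c, 0, b], ![c, b, 0, a],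
    ![a, 0, b, c], ![b, 0, c, a], ![c, 0, a, b], ![0, b, a, c], ![0, a, c, b], ![0, c, b, a]]

/-- The coordinates of the vertices of the 600-cell with circumradius `2`. -/
def coord : Vertex → Fin 4 → GoldenInt
  | .inl (.inl (i, a)) => Pi.single i (signed a 2)
  | .inl (.inr (a, b, c, d)) => ![signed a 1, signed b 1, signed c 1, signed d 1]
  | .inr (i, a, b, c) => evenPerm (signed a ⟨0, 1⟩) (signed b 1) (signed c ⟨-1, 1⟩) i

/-- The inner product of the coordinate vectors. It is written out for fast evaluation. -/
def dot (x y : Vertex) : GoldenInt :=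
  coord x 0 * coord y 0 + coord x 1 * coord y 1 + coord x 2 * coord y 2 + coord x 3 * coord y 3

set_option maxRecDepth 100000

theorem dot_self : ∀ x, dot x x = 4 := by decide +kernel

theorem dot_eq_or_bracketLE : ∀ x y, x ≠ y → dot x y = ⟨0, 2⟩ ∨ (dot x y).BracketLE 2 := by
  decide +kernel

theorem dot_inl_inl_eq_or_bracketLE : ∀ i j, i ≠ j →
    dot (.inl i) (.inl j) = 2 ∨ (dot (.inl i) (.inl j)).BracketLE 0 := by
  decide +kernel

theorem card_dot_inl_inl_eq : ∀ i, #{j | dot (.inl i) (.inl j) = 2} = 8 := by decide +kernel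

theorem card_dot_eq : ∀ x, #{y | dot x y = ⟨0, 2⟩} = 12 := by decide +kernel

theorem card_dot_inl_eq_of_dot_eq : ∀ i x, dot (.inl i) x = ⟨0, 2⟩ →
    #{y | dot (.inl i) y = ⟨0, 2⟩ ∧ dot x y = ⟨0, 2⟩} = 5 := by
  decide +kernel

theorem card_dot_inl_eq_dot_inl_eq : ∀ i j, dot (.inl i) (.inl j) = 2 →
    #{x | dot (.inl i) x = ⟨0, 2⟩ ∧ dot (.inl j) x = ⟨0, 2⟩} = 3 := by
  decide +kernel

theorem eq_or_dot_eq : ∀ i j, dot (.inl i) (.inl j) = 2 →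
    ∀ x, dot (.inl i) x = ⟨0, 2⟩ → dot (.inl j) x = ⟨0, 2⟩ →
    ∀ y, dot (.inl i) y = ⟨0, 2⟩ → dot (.inl j) y = ⟨0, 2⟩ → x = y ∨ dot x y = ⟨0, 2⟩ := by
  decide +kernel

theorem coord_add_bracketLE : ∀ x, (coord x 0 + coord x 1).BracketLE ⟨1, 1⟩ := by decide +kernel

theorem coord_inl_add_bracketLE : ∀ i, (coord (.inl i) 0 + coord (.inl i) 1).BracketLE 2 := by
  decide +kernel

end SixHundredCell

namespace SixHundredCell

open GoldenInt

/-- The vertex of the 600-cell in Euclidean space. -/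
def point (x : Vertex) : EuclideanSpace ℝ (Fin 4) := WithLp.toLp 2 fun k ↦ toReal (coord x k)

theorem inner_point (x y : Vertex) : ⟪point x, point y⟫ = toReal (dot x y) := by
  simp [point, dot, PiLp.inner_apply, Fin.sum_univ_four, mul_comm]

/-- The ball centred in the direction of a vertex of the 600-cell. Its radius is chosen such that
the balls of adjacent vertices touch. -/
def ball (x : Vertex) : EuclideanSpace ℝ (Fin 4) × ℝ := (φ • point x, φ * √(φ + 2))

/-- The mirror concentric with the ball of `i` that is orthogonal to the balls of the
neighbours of `i`. -/
def root (i : CoreVertex) : EuclideanSpace ℝ (Fin 4) × ℝ :=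
  ((φ / 2) • point (.inl i), (φ + 2) / 5 * √(φ + 2))

theorem toReal_zero_two : toReal ⟨0, 2⟩ = 2 * φ := by simp [toReal_apply]

theorem lorentzForm_ball_ball (x y : Vertex) :
    lorentzForm _ (ball x) (ball y) = φ ^ 2 * (toReal (dot x y) - φ - 2) := by
  have hsqrt : √(φ + 2) ^ 2 = φ + 2 := Real.sq_sqrt (by linarith [Real.goldenRatio_pos])
  simp only [lorentzForm_apply, ball, real_inner_smul_left, real_inner_smul_right, inner_point]
  linear_combination -φ ^ 2 * hsqrt

theorem height_root_ball (i : CoreVertex) (x : Vertex) :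
    height (lorentzForm _) (root i) (ball x) = φ ^ 2 * (φ - toReal (dot (.inl i) x) / 2) := by
  have hsqrt : √(φ + 2) ^ 2 = φ + 2 := Real.sq_sqrt (by linarith [Real.goldenRatio_pos])
  simp only [height, lorentzForm_apply, ball, root, real_inner_smul_left, real_inner_smul_right,
    inner_point]
  linear_combination (φ + 2) / 5 * φ * hsqrt + (-4 * φ / 5) * Real.goldenRatio_sq

theorem lorentzForm_root_root (i j : CoreVertex) :
    (6 - 2 * φ) * lorentzForm _ (root i) (root j) =
      (φ + 2) / 2 * toReal (dot (.inl i) (.inl j)) - 2 * φ ^ 2 := by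
  have hsqrt : √(φ + 2) ^ 2 = φ + 2 := Real.sq_sqrt (by linarith [Real.goldenRatio_pos])
  simp only [lorentzForm_apply, root, real_inner_smul_left, real_inner_smul_right, inner_point]
  have h₁ : (6 - 2 * φ) * (φ + 2) = 10 := by linear_combination -2 * Real.goldenRatio_sq
  have h₂ : (φ + 2) ^ 2 = 5 * φ ^ 2 := by linear_combination -4 * Real.goldenRatio_sq
  have h₃ : (6 - 2 * φ) * (φ / 2) ^ 2 = (φ + 2) / 2 := by
    linear_combination (1 - φ / 2) * Real.goldenRatio_sq
  linear_combination toReal (dot (.inl i) (.inl j)) * h₃ - (φ + 2) ^ 2 / 25 * h₁ - 2 / 5 * h₂ -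
    (6 - 2 * φ) * ((φ + 2) / 5) ^ 2 * hsqrt

/-- The balls and mirrors of the 600-cell in Lorentz space. -/
def mirrorSystem : MirrorSystem (EuclideanSpace ℝ (Fin 4) × ℝ) CoreVertex SnubVertex where
  form := lorentzForm _
  form_isSymm := lorentzForm_isSymm
  scale := 6 - 2 * φ
  two_le_scale := by linarith [Real.goldenRatio_lt_two]
  ball := ball
  root := root
  form_ball_self x := by
    rw [lorentzForm_ball_ball, dot_self, map_ofNat]
    linear_combination (1 - φ) * Real.goldenRatio_sq
  form_ball_le {x y} hxy := by
    rw [lorentzForm_ball_ball]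
    obtain h | h := dot_eq_or_bracketLE x y hxy
    · rw [h, toReal_zero_two]
      nlinarith [Real.goldenRatio_sq]
    · have := h.toReal_le
      rw [map_ofNat] at this
      nlinarith [Real.goldenRatio_sq, Real.one_lt_goldenRatio]
  form_root_self i := by
    rw [lorentzForm_root_root, dot_self, map_ofNat]
    linear_combination -2 * Real.goldenRatio_sq
  form_root_le {i j} hij := by
    rw [lorentzForm_root_root]
    obtain h | h := dot_inl_inl_eq_or_bracketLE i j hij
    · rw [h, map_ofNat]
      nlinarith [Real.goldenRatio_sq]
    · have := h.toReal_le
      rw [map_zero] at this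
      nlinarith [Real.goldenRatio_sq, Real.goldenRatio_pos]
  height_self i := by
    rw [height_root_ball, dot_self, map_ofNat]
    linear_combination (φ - 1) * Real.goldenRatio_sq
  height_eq_zero_or {i x} hx := by
    rw [height_root_ball]
    obtain h | h := dot_eq_or_bracketLE (.inl i) x hx.symm
    · rw [h, toReal_zero_two]
      left
      ring
    · have := h.toReal_le
      rw [map_ofNat] at this
      right
      nlinarith [Real.goldenRatio_sq, Real.one_lt_goldenRatio]
  le_height_inl {i j} hij := by
    rw [height_root_ball]
    have : toReal (dot (.inl i) (.inl j)) ≤ 2 := by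
      obtain h | h := dot_inl_inl_eq_or_bracketLE i j hij.symm
      · rw [h, map_ofNat]
      · exact h.toReal_le.trans (by simp)
    nlinarith [Real.goldenRatio_sq, Real.one_lt_goldenRatio]

theorem adj_iff {i j : CoreVertex} : mirrorSystem.Adj i j ↔ dot (.inl i) (.inl j) = 2 := by
  refine ⟨fun h ↦ toReal_injective ?_, fun h ↦ ?_⟩
  · rw [MirrorSystem.Adj] at h
    simp only [mirrorSystem, lorentzForm_root_root] at h
    rw [map_ofNat]
    have : (φ + 2) * (toReal (dot (.inl i) (.inl j)) - 2) = 0 := by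
      linear_combination 2 * h + 4 * Real.goldenRatio_sq
    have hpos : φ + 2 ≠ 0 := by positivity
    linarith [(mul_eq_zero_iff_left hpos).1 this]
  · simp only [MirrorSystem.Adj, mirrorSystem, lorentzForm_root_root, h, map_ofNat]
    linear_combination -2 * Real.goldenRatio_sq

theorem tangent_iff {x y : Vertex} : mirrorSystem.Tangent x y ↔ dot x y = ⟨0, 2⟩ := by
  have hpos : φ ^ 2 ≠ 0 := by positivity
  rw [← toReal_injective.eq_iff, toReal_zero_two, MirrorSystem.Tangent]
  simp only [mirrorSystem, lorentzForm_ball_ball]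
  refine ⟨fun h ↦ mul_left_cancel₀ hpos ?_, fun h ↦ ?_⟩
  · linear_combination h + (1 - φ) * Real.goldenRatio_sq
  · rw [h]
    linear_combination (φ - 1) * Real.goldenRatio_sq

theorem ballHeight_eq_zero_iff {i : CoreVertex} {x : Vertex} :
    mirrorSystem.ballHeight i x = 0 ↔ dot (.inl i) x = ⟨0, 2⟩ := by
  have hpos : φ ^ 2 ≠ 0 := by positivity
  rw [← toReal_injective.eq_iff, toReal_zero_two, MirrorSystem.ballHeight]
  simp only [mirrorSystem, height_root_ball, mul_eq_zero_iff_left hpos]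
  constructor <;> intro h <;> linarith

theorem card_dot_eq_dot_inl_eq (i : CoreVertex) :
    #{e : Vertex × Vertex | dot e.1 e.2 = ⟨0, 2⟩ ∧
      dot (.inl i) e.1 = ⟨0, 2⟩ ∧ dot (.inl i) e.2 = ⟨0, 2⟩} = 60 := by
  have h := card_filter_rel_eq (r := fun x y ↦ dot (.inl i) y = ⟨0, 2⟩ ∧ dot x y = ⟨0, 2⟩)
    (s := {x | dot (.inl i) x = ⟨0, 2⟩})
    fun x hx ↦ card_dot_inl_eq_of_dot_eq i x (mem_filter.1 hx).2
  rw [card_dot_eq] at h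
  convert h using 2
  ext e
  simp only [mem_filter, mem_univ, true_and, mem_product, and_true]
  tauto

theorem card_dot_eq_dot_inl_eq_dot_inl_eq {i j : CoreVertex} (hij : dot (.inl i) (.inl j) = 2) :
    #{e : Vertex × Vertex | dot e.1 e.2 = ⟨0, 2⟩ ∧
      (dot (.inl i) e.1 = ⟨0, 2⟩ ∧ dot (.inl i) e.2 = ⟨0, 2⟩) ∧
      dot (.inl j) e.1 = ⟨0, 2⟩ ∧ dot (.inl j) e.2 = ⟨0, 2⟩} = 6 := by
  have h := offDiag_card ({x | dot (.inl i) x = ⟨0, 2⟩ ∧ dot (.inl j) x = ⟨0, 2⟩} : Finset Vertex)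
  rw [card_dot_inl_eq_dot_inl_eq i j hij] at h
  refine (congrArg card ?_).trans h
  ext ⟨x, y⟩
  simp only [mem_filter, mem_univ, true_and, mem_offDiag]
  refine ⟨fun ⟨hxy, hi, hj⟩ ↦ ⟨⟨hi.1, hj.1⟩, ⟨hi.2, hj.2⟩, ?_⟩, fun ⟨hx, hy, hxy⟩ ↦
    ⟨(eq_or_dot_eq i j hij x hx.1 hx.2 y hy.1 hy.2).resolve_left hxy, ⟨hx.1, hy.1⟩, hx.2, hy.2⟩⟩
  rintro rfl
  exact absurd (hxy.symm.trans (dot_self x)) (by decide)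

theorem isSixHundredCell : mirrorSystem.IsSixHundredCell where
  card_left := by rfl
  card_right := by rfl
  card_adj i := by
    simp only [adj_iff]
    convert card_dot_inl_inl_eq i
  card_tangent x := by
    simp only [tangent_iff]
    convert card_dot_eq x
  card_height_eq_zero i := by
    simp only [ballHeight_eq_zero_iff]
    convert card_dot_eq (.inl i)
  card_tangent_height_eq_zero i := by
    simp only [tangent_iff, ballHeight_eq_zero_iff]
    convert card_dot_eq_dot_inl_eq i
  card_height_eq_zero_of_adj {i j} h := by
    simp only [ballHeight_eq_zero_iff]
    convert card_dot_inl_eq_dot_inl_eq i j (adj_iff.1 h)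
  card_tangent_height_eq_zero_of_adj {i j} h := by
    simp only [tangent_iff, ballHeight_eq_zero_iff]
    convert card_dot_eq_dot_inl_eq_dot_inl_eq (adj_iff.1 h)

/-- The point of the sphere that stereographic projection sends to infinity. It lies outside all
balls, and on the side of each mirror away from the ball it replaces. -/
def pole : EuclideanSpace ℝ (Fin 4) := (√2)⁻¹ • !₂[1, 1, 0, 0]

theorem norm_pole : ‖pole‖ = 1 := by
  have h : ‖(!₂[1, 1, 0, 0] : EuclideanSpace ℝ (Fin 4))‖ = √2 := by
    simp [EuclideanSpace.norm_eq, Fin.sum_univ_four, one_add_one_eq_two]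
  rw [pole, norm_smul, norm_inv, Real.norm_of_nonneg (Real.sqrt_nonneg 2), h,
    inv_mul_cancel₀ (by positivity)]

theorem inner_pole_point (x : Vertex) :
    ⟪pole, point x⟫ = (√2)⁻¹ * toReal (coord x 0 + coord x 1) := by
  simp only [pole, point, PiLp.inner_apply, PiLp.smul_apply, smul_eq_mul, RCLike.inner_apply,
    Real.ringHom_apply, Fin.sum_univ_four, Fin.isValue, Matrix.cons_val_zero, mul_one,
    Matrix.cons_val_one, Matrix.cons_val, mul_zero, add_zero, map_add]
  ring

theorem sphereCurvature_ball_pos (x : Vertex) : 0 < sphereCurvature pole (ball x) := by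
  have hx : toReal (coord x 0 + coord x 1) ≤ 1 + φ := by
    simpa [toReal_apply] using (coord_add_bracketLE x).toReal_le
  have hlt : 1 + φ < √2 * √(φ + 2) := by
    rw [← Real.sqrt_mul zero_le_two]
    exact Real.lt_sqrt_of_sq_lt (by nlinarith [Real.goldenRatio_sq, Real.goldenRatio_lt_two])
  rw [sphereCurvature_apply, ball, inner_smul_right, inner_pole_point, sub_pos]
  refine mul_lt_mul_of_pos_left ?_ Real.goldenRatio_pos
  rw [inv_mul_lt_iff₀ (by positivity)]
  exact hx.trans_lt hlt

theorem sphereCurvature_root_nonneg (i : CoreVertex) : 0 ≤ sphereCurvature pole (root i) := by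
  have hi : toReal (coord (.inl i) 0 + coord (.inl i) 1) ≤ 2 := by
    simpa only [map_ofNat] using (coord_inl_add_bracketLE i).toReal_le
  have hle : 5 / 2 ≤ √2 * √(φ + 2) := by
    rw [← Real.sqrt_mul zero_le_two]
    exact Real.le_sqrt_of_sq_le (by nlinarith [Real.goldenRatio_sq, Real.one_lt_goldenRatio])
  rw [sphereCurvature_apply, root, inner_smul_right, inner_pole_point, sub_nonneg]
  calc φ / 2 * ((√2)⁻¹ * toReal (coord (.inl i) 0 + coord (.inl i) 1)) ≤ φ / 2 * ((√2)⁻¹ * 2) := by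
        gcongr
    _ ≤ (φ + 2) / 5 * ((√2)⁻¹ * (5 / 2)) := by
        have : 0 < (√2)⁻¹ := by positivity
        nlinarith [Real.goldenRatio_lt_two]
    _ ≤ (φ + 2) / 5 * √(φ + 2) := by
        gcongr
        rwa [inv_mul_le_iff₀ (by positivity)]

end SixHundredCell

open MirrorSystem SixHundredCell

/-- There is a finite packing of balls in ℝ³ with average kissing number at
least 7656/607. -/
theorem exists_packing_avg_kissing :
    ∃ (n : ℕ) (c : Fin n → EuclideanSpace ℝ (Fin 3)) (r : Fin n → ℝ),
      1 ≤ n ∧ (∀ i, 0 < r i) ∧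
      (∀ i j, i ≠ j → r i + r j ≤ dist (c i) (c j)) ∧
      (7656 / 607 : ℝ) ≤
        2 * (Nat.card {p : Fin n × Fin n //
              p.1 < p.2 ∧ dist (c p.1) (c p.2) = r p.1 + r p.2} : ℝ) / (n : ℝ) := by
  classical
  have : Fact (finrank ℝ (EuclideanSpace ℝ (Fin 4)) = 3 + 1) := ⟨finrank_euclideanSpace_fin⟩
  obtain ⟨c, r, hr, hsep, hcard⟩ := exists_packing_of_lorentzForm_le (d := 3) norm_pole
    mirrorSystem.packing mirrorSystem.image (fun _ ↦ form_image_self)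
    (fun _ hz ↦ image_pos hz sphereCurvature_ball_pos sphereCurvature_root_nonneg)
    (fun _ hz _ hw ↦ form_image_le_of_mem_packing hz hw)
  refine ⟨_, c, r, isSixHundredCell.card_packing_pos, hr, hsep, ?_⟩
  have hratio := isSixHundredCell.le_card_tangentPairs_div_card_packing
  rwa [show #mirrorSystem.tangentPairs = _ from hcard, Nat.cast_mul, Nat.cast_ofNat] at hratio
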